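/- arXiv:2202.12061 — 6 statements merged into one kernel-verified Lean document; each statement's English description precedes it below -/
import Mathlib

section
/- The combinatorial R-map satisfies the set-theoretical tetrahedron equation on ℕ⁶: as maps from ℕ⁶ to ℕ⁶, R₍₁,₂,₄₎ ∘ R₍₁,₃,₅₎ ∘ R₍₂,₃,₆₎ ∘ R₍₄,₅,₆₎ = R₍₄,₅,₆₎ ∘ R₍₂,₃,₆₎ ∘ R₍₁,₃,₅₎ ∘ R₍₁,₂,₄₎. -/
/-- The combinatorial R-map on ℕ³. -/
def combR : ℕ × ℕ × ℕ → ℕ × ℕ × ℕ :=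
  fun p => (p.2.1 + (p.1 - p.2.2), min p.1 p.2.2, p.2.1 + (p.2.2 - p.1))

/-- `app3 f i j k` applies `f` to the components at positions `i, j, k` (in that order)
of an `N`-fold product, leaving all other components unchanged. -/
def app3 {V : Type*} {N : ℕ} (f : V × V × V → V × V × V) (i j k : Fin N)
    (v : Fin N → V) : Fin N → V := fun m =>
  if m = i then (f (v i, v j, v k)).1
  else if m = j then (f (v i, v j, v k)).2.1
  else if m = k then (f (v i, v j, v k)).2.2
  else v m

theorem combR_tetrahedron :
    app3 combR 0 1 3 ∘ app3 combR 0 2 4 ∘ app3 combR 1 2 5 ∘ app3 combR 3 4 5 =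
      app3 combR 3 4 5 ∘ app3 combR 1 2 5 ∘ app3 combR 0 2 4 ∘
        (app3 combR 0 1 3 : (Fin 6 → ℕ) → Fin 6 → ℕ) := by
  funext v m
  simp only [Function.comp]
  generalize h0 : v 0 = a
  generalize h1 : v 1 = b
  generalize h2 : v 2 = c
  generalize h3 : v 3 = d
  generalize h4 : v 4 = e
  generalize h5 : v 5 = f
  fin_cases m <;> simp [app3, combR, h0, h1, h2, h3, h4, h5] <;>
    clear h0 h1 h2 h3 h4 h5 <;>
    rcases le_total a d with h | h <;> rcases le_total d f with h' | h' <;>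
    simp only [min_eq_left, min_eq_right, Nat.sub_eq_zero_of_le, h, h', Nat.add_zero] <;>
    omega
end

section
/- The combinatorial K-map is an involution: for all a, b, c, d ∈ ℕ, K(K(a,b,c,d)) = (a,b,c,d). -/
/-- The combinatorial K-map on ℕ⁴: `K(a,b,c,d) = (a',b',c',d')` where, computing in ℤ,
`x = (c − a + (d − b)₊)₊`, `a' = x + a + b − d`, `b' = c − x + d − min(a, c + x)`,
`c' = min(a, c + x)`, `d' = b + (c + x − a)₊`, with `(x)₊ = max(x,0)`;
all four outputs are nonnegative integers. -/
def combK : ℕ × ℕ × ℕ × ℕ → ℕ × ℕ × ℕ × ℕ := fun p =>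
  let a : ℤ := p.1; let b : ℤ := p.2.1; let c : ℤ := p.2.2.1; let d : ℤ := p.2.2.2
  let x : ℤ := max (c - a + max (d - b) 0) 0
  ((x + a + b - d).toNat, (c - x + d - min a (c + x)).toNat,
    (min a (c + x)).toNat, (b + max (c + x - a) 0).toNat)

theorem combK_eq (a b c d a' b' c' d' : ℕ) (x y m z : ℤ)
    (hy : y = max ((d : ℤ) - b) 0) (hx : x = max ((c : ℤ) - a + y) 0)
    (hm : m = min (a : ℤ) (c + x)) (hz : z = max ((c : ℤ) + x - a) 0)
    (h1 : (a' : ℤ) = x + a + b - d) (h2 : (b' : ℤ) = c - x + d - m)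
    (h3 : (c' : ℤ) = m) (h4 : (d' : ℤ) = b + z) :
    combK (a, b, c, d) = (a', b', c', d') := by
  subst hy hx hm hz
  simp only [combK]
  rw [← h1, ← h2, ← h3, ← h4]
  simp only [Int.toNat_natCast]

/-- The combinatorial K-map is an involution. -/
theorem combK_involution (a b c d : ℕ) : combK (combK (a, b, c, d)) = (a, b, c, d) := by
  obtain ⟨y, hy⟩ : ∃ y : ℤ, y = max ((d : ℤ) - b) 0 := ⟨_, rfl⟩
  obtain ⟨x, hx⟩ : ∃ x : ℤ, x = max ((c : ℤ) - a + y) 0 := ⟨_, rfl⟩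
  obtain ⟨m, hm⟩ : ∃ m : ℤ, m = min (a : ℤ) (c + x) := ⟨_, rfl⟩
  obtain ⟨z, hz⟩ : ∃ z : ℤ, z = max ((c : ℤ) + x - a) 0 := ⟨_, rfl⟩
  obtain ⟨a', h1⟩ := Int.eq_ofNat_of_zero_le (show 0 ≤ x + a + b - d by omega)
  obtain ⟨b', h2⟩ := Int.eq_ofNat_of_zero_le (show 0 ≤ c - x + d - m by omega)
  obtain ⟨c', h3⟩ := Int.eq_ofNat_of_zero_le (show 0 ≤ m by omega)
  obtain ⟨d', h4⟩ := Int.eq_ofNat_of_zero_le (show 0 ≤ b + z by omega)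
  rw [combK_eq a b c d a' b' c' d' x y m z hy hx hm hz h1.symm h2.symm h3.symm h4.symm]
  obtain ⟨y', hy'⟩ : ∃ y : ℤ, y = max ((d' : ℤ) - b') 0 := ⟨_, rfl⟩
  obtain ⟨x', hx'⟩ : ∃ x : ℤ, x = max ((c' : ℤ) - a' + y') 0 := ⟨_, rfl⟩
  have key : x' = x := by omega
  subst key
  apply combK_eq a' b' c' d' a b c d x' y' _ _ hy' hx' rfl rfl <;> omega
end

section
/- The combinatorial R-map and K-map satisfy the 3D reflection equation of type C₃ on ℕ⁹: as maps from ℕ⁹ to ℕ⁹, R₍₆,₈,₉₎ ∘ K₍₃,₅,₇,₉₎ ∘ R₍₂,₄,₉₎ ∘ R₍₂,₅,₈₎ ∘ K₍₁,₄,₇,₈₎ ∘ K₍₁,₂,₃,₆₎ ∘ R₍₄,₅,₆₎ = R₍₄,₅,₆₎ ∘ K₍₁,₂,₃,₆₎ ∘ K₍₁,₄,₇,₈₎ ∘ R₍₂,₅,₈₎ ∘ R₍₂,₄,₉₎ ∘ K₍₃,₅,₇,₉₎ ∘ R₍₆,₈,₉₎. -/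
set_option maxHeartbeats 4000000
set_option linter.unusedSimpArgs false
/-- `app4 f i j k l` applies `f` to the components at positions `i, j, k, l` (in that order)
of an `N`-fold product, leaving all other components unchanged. -/
def app4 {V : Type*} {N : ℕ} (f : V × V × V × V → V × V × V × V) (i j k l : Fin N)
    (v : Fin N → V) : Fin N → V := fun m =>
  if m = i then (f (v i, v j, v k, v l)).1
  else if m = j then (f (v i, v j, v k, v l)).2.1
  else if m = k then (f (v i, v j, v k, v l)).2.2.1
  else if m = l then (f (v i, v j, v k, v l)).2.2.2
  else v m


/-- `m` is the minimum of two integers. -/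
def MinEq2 (a b m : ℤ) : Prop := min a b = m
/-- `m` is the minimum of three integers. -/
def MinEq3 (a b c m : ℤ) : Prop := min (min a b) c = m
/-- `m` is the minimum of four integers. -/
def MinEq4 (a b c d m : ℤ) : Prop := min (min (min a b) c) d = m

theorem MinEq2.shift {A B P a b m k : ℤ} (h : MinEq2 A B P) (h' : MinEq2 a b m)
    (ha : A = a + k) (hb : B = b + k) : P = m + k := by
  unfold MinEq2 at *; omega
theorem MinEq3.shift {A B C P a b c m k : ℤ} (h : MinEq3 A B C P) (h' : MinEq3 a b c m)
    (ha : A = a + k) (hb : B = b + k) (hc : C = c + k) : P = m + k := by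
  unfold MinEq3 at *; omega
theorem MinEq4.shift {A B C D P a b c d m k : ℤ} (h : MinEq4 A B C D P) (h' : MinEq4 a b c d m)
    (ha : A = a + k) (hb : B = b + k) (hc : C = c + k) (hd : D = d + k) : P = m + k := by
  unfold MinEq4 at *; omega

/-- The tropical semiring of integers. -/
abbrev TZ := Tropical (WithTop ℤ)
/-- The embedding of the integers into the tropical semiring. -/
def tr (n : ℤ) : TZ := Tropical.trop (n : WithTop ℤ)

theorem tr_add (a b : ℤ) : tr (a + b) = tr a * tr b := rfl
theorem tr_min (a b : ℤ) : tr (min a b) = tr a + tr b := by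
  apply Tropical.untrop_injective
  simp [tr]
theorem tr_zero : tr 0 = 1 := rfl
theorem tr_inj {a b : ℤ} : tr a = tr b ↔ a = b := by
  simp [tr]
theorem tz_idem (a : TZ) : a + a = a := by simp
theorem minEq2_iff {a b m : ℤ} : MinEq2 a b m ↔ tr m = tr a + tr b := by
  rw [MinEq2, ← tr_min, tr_inj, eq_comm]
theorem minEq3_iff {a b c m : ℤ} : MinEq3 a b c m ↔ tr m = tr a + tr b + tr c := by
  rw [MinEq3, ← tr_min, ← tr_min, tr_inj, eq_comm]
theorem minEq4_iff {a b c d m : ℤ} :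
    MinEq4 a b c d m ↔ tr m = tr a + tr b + (tr c + tr c) + tr d := by
  rw [MinEq4, tz_idem, ← tr_min, ← tr_min, ← tr_min, tr_inj, eq_comm]

theorem combR_spec (a b c : ℕ) : ∃ a' b' c' : ℕ, combR (a, b, c) = (a', b', c') ∧
    MinEq2 a c b' ∧ (a' : ℤ) = a + b - b' ∧ (c' : ℤ) = b + c - b' := by
  refine ⟨_, _, _, rfl, ?_, ?_, ?_⟩
  · unfold MinEq2; dsimp only; omega
  · dsimp only; omega
  · dsimp only; omega

theorem combK_spec (a b c d : ℕ) : ∃ (a' b' c' d' : ℕ) (P Q : ℤ),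
    combK (a, b, c, d) = (a', b', c', d') ∧
    MinEq3 (a + b) (a + d) (c + d) P ∧ MinEq4 (a + a + b) (a + a + d) (a + c + d) (c + c + d) Q ∧
    (a' : ℤ) = a + b + c - P ∧ (b' : ℤ) = 2 * P - Q ∧ (c' : ℤ) = Q - P ∧
    (d' : ℤ) = b + 2 * c + d - Q := by
  refine ⟨_, _, _, _, _, _, rfl, rfl, rfl, ?_, ?_, ?_, ?_⟩ <;> dsimp only <;> omega

theorem trop_exists (x1 x2 x3 x4 x5 x6 x7 x8 x9 : ℤ) : ∃ p1 p2 p3 p4 p5 p6 p7 p8 p9 p10 p11 p12 p13 p14 : ℤ,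
    MinEq2 (x4) (x6) (p1) ∧
    MinEq3 (x1 + x2 + p1) (x1 + x5 + x6) (x3 + x5 + x6) (p2) ∧
    MinEq4 (x1 + x1 + x2 + p1) (x1 + x1 + x5 + x6) (x1 + x3 + x5 + x6) (x3 + x3 + x5 + x6) (p3) ∧
    MinEq3 (x1 + x2 + x3 + x4 + x5) (x1 + x2 + x3 + x8 + p1) (x7 + x8 + p2) (p4) ∧
    MinEq4 (x1 + x1 + x2 + x2 + x3 + x3 + x4 + x5 + p1) (x1 + x1 + x2 + x2 + x3 + x3 + x8 + p1 + p1) (x1 + x2 + x3 + x7 + x8 + p1 + p2) (x7 + x7 + x8 + p2 + p2) (p5) ∧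
    MinEq2 (p5) (x4 + x5 + x7 + x7 + x8 + p3) (p1 + p6) ∧
    MinEq2 (p5) (x9 + p6) (p7) ∧
    MinEq3 (p2 + p2 + p7) (x9 + p3 + p4 + p4) (x9 + p4 + p5) (p2 + p5 + p8) ∧
    MinEq4 (p2 + p2 + p3 + p7) (x9 + p3 + p3 + p4 + p4) (x9 + p3 + p4 + p5) (x9 + p5 + p5) (p2 + p2 + p5 + p9) ∧
    MinEq2 (x2 + x3 + x3 + x5 + x6 + p9) (x9 + p6) (p3 + p10) ∧
    MinEq2 (x6) (x9) (p11) ∧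
    MinEq3 (x3 + x5 + p11) (x3 + x8 + x9) (x7 + x8 + x9) (p12) ∧
    MinEq4 (x3 + x3 + x5 + p11) (x3 + x3 + x8 + x9) (x3 + x7 + x8 + x9) (x7 + x7 + x8 + x9) (p13) ∧
    MinEq2 (x2 + p13) (x5 + x7 + x7 + x8 + x9) (p10) ∧
    MinEq2 (x2 + x4 + p13) (p10 + p11) (p14) ∧
    MinEq3 (x1 + p14) (x1 + p12 + p12) (p12 + p13) (p8 + p13) ∧
    MinEq4 (x1 + x1 + p14) (x1 + x1 + p12 + p12) (x1 + p12 + p13) (p13 + p13) (p9 + p13) ∧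
    MinEq3 (x1 + x2 + x4 + p12 + p12) (x1 + x6 + x8 + p14) (x3 + x5 + x6 + x7 + x8 + p8 + p11) (p4 + p11 + p12) ∧
    MinEq4 (x1 + x1 + x2 + x4 + p12 + p12 + p14) (x1 + x1 + x6 + x8 + p14 + p14) (x1 + x3 + x5 + x6 + x7 + x8 + p8 + p11 + p14) (x3 + x3 + x5 + x5 + x6 + x7 + x7 + x8 + p8 + p8 + p11 + p11) (p7 + p11 + p12 + p12) ∧
    MinEq2 (p7 + p10) (x2 + x3 + x3 + x4 + x5 + x5 + x6 + x7 + x7 + x8 + p9) (p6 + p14) := by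
  obtain ⟨p1, h1⟩ : ∃ n : ℤ, tr n = tr x4 + tr x6 := by
    simp only [← tr_add, ← tr_min]; exact ⟨_, rfl⟩
  obtain ⟨p2, h2⟩ : ∃ n : ℤ, tr n = tr x1*tr x2*tr x4 + tr x1*tr x2*tr x6 + tr x1*tr x5*tr x6 + tr x3*tr x5*tr x6 := by
    simp only [← tr_add, ← tr_min]; exact ⟨_, rfl⟩
  obtain ⟨p3, h3⟩ : ∃ n : ℤ, tr n = tr x1*tr x1*tr x2*tr x4 + tr x1*tr x1*tr x2*tr x6 + tr x1*tr x1*tr x5*tr x6 + tr x1*tr x3*tr x5*tr x6 + tr x1*tr x3*tr x5*tr x6 + tr x3*tr x3*tr x5*tr x6 := by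
    simp only [← tr_add, ← tr_min]; exact ⟨_, rfl⟩
  obtain ⟨p4, h4⟩ : ∃ n : ℤ, tr n = tr x1*tr x2*tr x3*tr x4*tr x5 + tr x1*tr x2*tr x3*tr x4*tr x8 + tr x1*tr x2*tr x3*tr x6*tr x8 + tr x1*tr x2*tr x4*tr x7*tr x8 + tr x1*tr x2*tr x6*tr x7*tr x8 + tr x1*tr x5*tr x6*tr x7*tr x8 + tr x3*tr x5*tr x6*tr x7*tr x8 := by
    simp only [← tr_add, ← tr_min]; exact ⟨_, rfl⟩
  obtain ⟨p5, h5⟩ : ∃ n : ℤ, tr n = tr x1*tr x1*tr x2*tr x2*tr x3*tr x3*tr x4*tr x4*tr x5 + tr x1*tr x1*tr x2*tr x2*tr x3*tr x3*tr x4*tr x5*tr x6 + tr x1*tr x1*tr x2*tr x2*tr x3*tr x3*tr x4*tr x4*tr x8 + tr x1*tr x1*tr x2*tr x2*tr x3*tr x3*tr x4*tr x6*tr x8 + tr x1*tr x1*tr x2*tr x2*tr x3*tr x3*tr x4*tr x6*tr x8 + tr x1*tr x1*tr x2*tr x2*tr x3*tr x3*tr x6*tr x6*tr x8 + tr x1*tr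 x1*tr x2*tr x2*tr x3*tr x4*tr x4*tr x7*tr x8 + tr x1*tr x1*tr x2*tr x2*tr x3*tr x4*tr x4*tr x7*tr x8 + tr x1*tr x1*tr x2*tr x2*tr x3*tr x4*tr x6*tr x7*tr x8 + tr x1*tr x1*tr x2*tr x2*tr x3*tr x4*tr x6*tr x7*tr x8 + tr x1*tr x1*tr x2*tr x2*tr x3*tr x4*tr x6*tr x7*tr x8 + tr x1*tr x1*tr x2*tr x2*tr x3*tr x4*tr x6*tr x7*tr x8 + tr x1*tr x1*tr x2*tr x3*tr x4*tr x5*tr x6*tr x7*tr x8 + tr x1*tr x1*tr x2*tr x3*tr x4*tr x5*tr x6*tr x7*tr x8 + tr x1*tr x2*tr x3*tr x3*tr x4*tr x5*tr x6*tr x7*tr x8 + tr x1*tr x2*tr x3*tr x3*tr x4*tr x5*tr x6*tr x7*tr x8 + tr x1*tr x1*tr x2*tr x2*tr x3*tr x6*tr x6*tr x7*tr x8 + tr x1*tr x1*tr x2*tr x2*tr x3*tr x6*tr x6*tr x7*tr x8 + tr x1*tr x1*tr x2*tr x3*tr x5*tr x6*tr x6*tr x7*tr x8 + tr x1*tr x1*tr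 x2*tr x3*tr x5*tr x6*tr x6*tr x7*tr x8 + tr x1*tr x2*tr x3*tr x3*tr x5*tr x6*tr x6*tr x7*tr x8 + tr x1*tr x2*tr x3*tr x3*tr x5*tr x6*tr x6*tr x7*tr x8 + tr x1*tr x1*tr x2*tr x2*tr x4*tr x4*tr x7*tr x7*tr x8 + tr x1*tr x1*tr x2*tr x2*tr x4*tr x6*tr x7*tr x7*tr x8 + tr x1*tr x1*tr x2*tr x2*tr x4*tr x6*tr x7*tr x7*tr x8 + tr x1*tr x1*tr x2*tr x4*tr x5*tr x6*tr x7*tr x7*tr x8 + tr x1*tr x1*tr x2*tr x4*tr x5*tr x6*tr x7*tr x7*tr x8 + tr x1*tr x2*tr x3*tr x4*tr x5*tr x6*tr x7*tr x7*tr x8 + tr x1*tr x2*tr x3*tr x4*tr x5*tr x6*tr x7*tr x7*tr x8 + tr x1*tr x1*tr x2*tr x2*tr x6*tr x6*tr x7*tr x7*tr x8 + tr x1*tr x1*tr x2*tr x5*tr x6*tr x6*tr x7*tr x7*tr x8 + tr x1*tr x1*tr x2*tr x5*tr x6*tr x6*tr x7*tr x7*tr x8 + tr x1*tr x2*tr x3*tr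 x5*tr x6*tr x6*tr x7*tr x7*tr x8 + tr x1*tr x2*tr x3*tr x5*tr x6*tr x6*tr x7*tr x7*tr x8 + tr x1*tr x1*tr x5*tr x5*tr x6*tr x6*tr x7*tr x7*tr x8 + tr x1*tr x3*tr x5*tr x5*tr x6*tr x6*tr x7*tr x7*tr x8 + tr x1*tr x3*tr x5*tr x5*tr x6*tr x6*tr x7*tr x7*tr x8 + tr x3*tr x3*tr x5*tr x5*tr x6*tr x6*tr x7*tr x7*tr x8 := by
    simp only [← tr_add, ← tr_min]; exact ⟨_, rfl⟩
  obtain ⟨p6, h6⟩ : ∃ n : ℤ, tr n = tr x1*tr x1*tr x2*tr x2*tr x3*tr x3*tr x4*tr x5 + tr x1*tr x1*tr x2*tr x2*tr x3*tr x3*tr x4*tr x8 + tr x1*tr x1*tr x2*tr x2*tr x3*tr x3*tr x6*tr x8 + tr x1*tr x1*tr x2*tr x2*tr x3*tr x4*tr x7*tr x8 + tr x1*tr x1*tr x2*tr x2*tr x3*tr x4*tr x7*tr x8 + tr x1*tr x1*tr x2*tr x2*tr x3*tr x6*tr x7*tr x8 + tr x1*tr x1*tr x2*tr x2*tr x3*tr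 x6*tr x7*tr x8 + tr x1*tr x1*tr x2*tr x2*tr x4*tr x7*tr x7*tr x8 + tr x1*tr x1*tr x2*tr x2*tr x6*tr x7*tr x7*tr x8 + tr x1*tr x1*tr x2*tr x3*tr x5*tr x6*tr x7*tr x8 + tr x1*tr x1*tr x2*tr x3*tr x5*tr x6*tr x7*tr x8 + tr x1*tr x1*tr x2*tr x4*tr x5*tr x7*tr x7*tr x8 + tr x1*tr x1*tr x2*tr x5*tr x6*tr x7*tr x7*tr x8 + tr x1*tr x1*tr x2*tr x5*tr x6*tr x7*tr x7*tr x8 + tr x1*tr x1*tr x5*tr x5*tr x6*tr x7*tr x7*tr x8 + tr x1*tr x2*tr x3*tr x3*tr x5*tr x6*tr x7*tr x8 + tr x1*tr x2*tr x3*tr x3*tr x5*tr x6*tr x7*tr x8 + tr x1*tr x2*tr x3*tr x5*tr x6*tr x7*tr x7*tr x8 + tr x1*tr x2*tr x3*tr x5*tr x6*tr x7*tr x7*tr x8 + tr x1*tr x3*tr x5*tr x5*tr x6*tr x7*tr x7*tr x8 + tr x1*tr x3*tr x5*tr x5*tr x6*tr x7*tr x7*tr x8 + tr x3*tr x3*tr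 x5*tr x5*tr x6*tr x7*tr x7*tr x8 := by
    simp only [← tr_add, ← tr_min]; exact ⟨_, rfl⟩
  obtain ⟨p7, h7⟩ : ∃ n : ℤ, tr n = tr x1*tr x1*tr x2*tr x2*tr x3*tr x3*tr x4*tr x4*tr x5 + tr x1*tr x1*tr x2*tr x2*tr x3*tr x3*tr x4*tr x5*tr x6 + tr x1*tr x1*tr x2*tr x2*tr x3*tr x3*tr x4*tr x4*tr x8 + tr x1*tr x1*tr x2*tr x2*tr x3*tr x3*tr x4*tr x6*tr x8 + tr x1*tr x1*tr x2*tr x2*tr x3*tr x3*tr x4*tr x6*tr x8 + tr x1*tr x1*tr x2*tr x2*tr x3*tr x3*tr x6*tr x6*tr x8 + tr x1*tr x1*tr x2*tr x2*tr x3*tr x4*tr x4*tr x7*tr x8 + tr x1*tr x1*tr x2*tr x2*tr x3*tr x4*tr x4*tr x7*tr x8 + tr x1*tr x1*tr x2*tr x2*tr x3*tr x4*tr x6*tr x7*tr x8 + tr x1*tr x1*tr x2*tr x2*tr x3*tr x4*tr x6*tr x7*tr x8 + tr x1*tr x1*tr x2*tr x2*tr x3*tr x4*tr x6*tr x7*tr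 x8 + tr x1*tr x1*tr x2*tr x2*tr x3*tr x4*tr x6*tr x7*tr x8 + tr x1*tr x1*tr x2*tr x3*tr x4*tr x5*tr x6*tr x7*tr x8 + tr x1*tr x1*tr x2*tr x3*tr x4*tr x5*tr x6*tr x7*tr x8 + tr x1*tr x2*tr x3*tr x3*tr x4*tr x5*tr x6*tr x7*tr x8 + tr x1*tr x2*tr x3*tr x3*tr x4*tr x5*tr x6*tr x7*tr x8 + tr x1*tr x1*tr x2*tr x2*tr x3*tr x6*tr x6*tr x7*tr x8 + tr x1*tr x1*tr x2*tr x2*tr x3*tr x6*tr x6*tr x7*tr x8 + tr x1*tr x1*tr x2*tr x3*tr x5*tr x6*tr x6*tr x7*tr x8 + tr x1*tr x1*tr x2*tr x3*tr x5*tr x6*tr x6*tr x7*tr x8 + tr x1*tr x2*tr x3*tr x3*tr x5*tr x6*tr x6*tr x7*tr x8 + tr x1*tr x2*tr x3*tr x3*tr x5*tr x6*tr x6*tr x7*tr x8 + tr x1*tr x1*tr x2*tr x2*tr x4*tr x4*tr x7*tr x7*tr x8 + tr x1*tr x1*tr x2*tr x2*tr x4*tr x6*tr x7*tr x7*tr x8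 + tr x1*tr x1*tr x2*tr x2*tr x4*tr x6*tr x7*tr x7*tr x8 + tr x1*tr x1*tr x2*tr x4*tr x5*tr x6*tr x7*tr x7*tr x8 + tr x1*tr x1*tr x2*tr x4*tr x5*tr x6*tr x7*tr x7*tr x8 + tr x1*tr x2*tr x3*tr x4*tr x5*tr x6*tr x7*tr x7*tr x8 + tr x1*tr x2*tr x3*tr x4*tr x5*tr x6*tr x7*tr x7*tr x8 + tr x1*tr x1*tr x2*tr x2*tr x6*tr x6*tr x7*tr x7*tr x8 + tr x1*tr x1*tr x2*tr x5*tr x6*tr x6*tr x7*tr x7*tr x8 + tr x1*tr x1*tr x2*tr x5*tr x6*tr x6*tr x7*tr x7*tr x8 + tr x1*tr x2*tr x3*tr x5*tr x6*tr x6*tr x7*tr x7*tr x8 + tr x1*tr x2*tr x3*tr x5*tr x6*tr x6*tr x7*tr x7*tr x8 + tr x1*tr x1*tr x5*tr x5*tr x6*tr x6*tr x7*tr x7*tr x8 + tr x1*tr x3*tr x5*tr x5*tr x6*tr x6*tr x7*tr x7*tr x8 + tr x1*tr x3*tr x5*tr x5*tr x6*tr x6*tr x7*tr x7*tr x8 +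 tr x3*tr x3*tr x5*tr x5*tr x6*tr x6*tr x7*tr x7*tr x8 + tr x1*tr x1*tr x2*tr x2*tr x3*tr x3*tr x4*tr x5*tr x9 + tr x1*tr x1*tr x2*tr x2*tr x3*tr x3*tr x4*tr x8*tr x9 + tr x1*tr x1*tr x2*tr x2*tr x3*tr x3*tr x6*tr x8*tr x9 + tr x1*tr x1*tr x2*tr x2*tr x3*tr x4*tr x7*tr x8*tr x9 + tr x1*tr x1*tr x2*tr x2*tr x3*tr x4*tr x7*tr x8*tr x9 + tr x1*tr x1*tr x2*tr x2*tr x3*tr x6*tr x7*tr x8*tr x9 + tr x1*tr x1*tr x2*tr x2*tr x3*tr x6*tr x7*tr x8*tr x9 + tr x1*tr x1*tr x2*tr x2*tr x4*tr x7*tr x7*tr x8*tr x9 + tr x1*tr x1*tr x2*tr x2*tr x6*tr x7*tr x7*tr x8*tr x9 + tr x1*tr x1*tr x2*tr x3*tr x5*tr x6*tr x7*tr x8*tr x9 + tr x1*tr x1*tr x2*tr x3*tr x5*tr x6*tr x7*tr x8*tr x9 + tr x1*tr x1*tr x2*tr x4*tr x5*tr x7*tr x7*tr x8*tr x9 + tr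 x1*tr x1*tr x2*tr x5*tr x6*tr x7*tr x7*tr x8*tr x9 + tr x1*tr x1*tr x2*tr x5*tr x6*tr x7*tr x7*tr x8*tr x9 + tr x1*tr x1*tr x5*tr x5*tr x6*tr x7*tr x7*tr x8*tr x9 + tr x1*tr x2*tr x3*tr x3*tr x5*tr x6*tr x7*tr x8*tr x9 + tr x1*tr x2*tr x3*tr x3*tr x5*tr x6*tr x7*tr x8*tr x9 + tr x1*tr x2*tr x3*tr x5*tr x6*tr x7*tr x7*tr x8*tr x9 + tr x1*tr x2*tr x3*tr x5*tr x6*tr x7*tr x7*tr x8*tr x9 + tr x1*tr x3*tr x5*tr x5*tr x6*tr x7*tr x7*tr x8*tr x9 + tr x1*tr x3*tr x5*tr x5*tr x6*tr x7*tr x7*tr x8*tr x9 + tr x3*tr x3*tr x5*tr x5*tr x6*tr x7*tr x7*tr x8*tr x9 := by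
    simp only [← tr_add, ← tr_min]; exact ⟨_, rfl⟩
  obtain ⟨p8, h8⟩ : ∃ n : ℤ, tr n = tr x1*tr x2*tr x4 + tr x1*tr x2*tr x6 + tr x1*tr x2*tr x9 + tr x1*tr x5*tr x6 + tr x1*tr x5*tr x9 + tr x1*tr x8*tr x9 + tr x3*tr x5*tr x6 + tr x3*tr x5*tr x9 + tr x3*tr x8*tr x9 + tr x7*tr x8*tr x9 := by
    simp only [← tr_add, ← tr_min]; exact ⟨_, rfl⟩
  obtain ⟨p9, h9⟩ : ∃ n : ℤ, tr n = tr x1*tr x1*tr x2*tr x4 + tr x1*tr x1*tr x2*tr x6 + tr x1*tr x1*tr x2*tr x9 + tr x1*tr x1*tr x5*tr x6 + tr x1*tr x1*tr x5*tr x9 + tr x1*tr x1*tr x8*tr x9 + tr x1*tr x3*tr x5*tr x6 + tr x1*tr x3*tr x5*tr x6 + tr x1*tr x3*tr x5*tr x9 + tr x1*tr x3*tr x5*tr x9 + tr x1*tr x3*tr x8*tr x9 + tr x1*tr x3*tr x8*tr x9 + tr x1*tr x7*tr x8*tr x9 + tr x1*tr x7*tr x8*tr x9 + tr x3*tr x3*tr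 x5*tr x6 + tr x3*tr x3*tr x5*tr x9 + tr x3*tr x3*tr x8*tr x9 + tr x3*tr x7*tr x8*tr x9 + tr x3*tr x7*tr x8*tr x9 + tr x7*tr x7*tr x8*tr x9 := by
    simp only [← tr_add, ← tr_min]; exact ⟨_, rfl⟩
  obtain ⟨p10, h10⟩ : ∃ n : ℤ, tr n = tr x2*tr x3*tr x3*tr x5*tr x6 + tr x2*tr x3*tr x3*tr x5*tr x9 + tr x2*tr x3*tr x3*tr x8*tr x9 + tr x2*tr x3*tr x7*tr x8*tr x9 + tr x2*tr x3*tr x7*tr x8*tr x9 + tr x2*tr x7*tr x7*tr x8*tr x9 + tr x5*tr x7*tr x7*tr x8*tr x9 := by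
    simp only [← tr_add, ← tr_min]; exact ⟨_, rfl⟩
  obtain ⟨p11, h11⟩ : ∃ n : ℤ, tr n = tr x6 + tr x9 := by
    simp only [← tr_add, ← tr_min]; exact ⟨_, rfl⟩
  obtain ⟨p12, h12⟩ : ∃ n : ℤ, tr n = tr x3*tr x5*tr x6 + tr x3*tr x5*tr x9 + tr x3*tr x8*tr x9 + tr x7*tr x8*tr x9 := by
    simp only [← tr_add, ← tr_min]; exact ⟨_, rfl⟩
  obtain ⟨p13, h13⟩ : ∃ n : ℤ, tr n = tr x3*tr x3*tr x5*tr x6 + tr x3*tr x3*tr x5*tr x9 + tr x3*tr x3*tr x8*tr x9 + tr x3*tr x7*tr x8*tr x9 + tr x3*tr x7*tr x8*tr x9 + tr x7*tr x7*tr x8*tr x9 := by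
    simp only [← tr_add, ← tr_min]; exact ⟨_, rfl⟩
  obtain ⟨p14, h14⟩ : ∃ n : ℤ, tr n = tr x2*tr x3*tr x3*tr x4*tr x5*tr x6 + tr x2*tr x3*tr x3*tr x4*tr x5*tr x9 + tr x2*tr x3*tr x3*tr x4*tr x8*tr x9 + tr x2*tr x3*tr x4*tr x7*tr x8*tr x9 + tr x2*tr x3*tr x4*tr x7*tr x8*tr x9 + tr x2*tr x4*tr x7*tr x7*tr x8*tr x9 + tr x2*tr x3*tr x3*tr x5*tr x6*tr x6 + tr x2*tr x3*tr x3*tr x5*tr x6*tr x9 + tr x2*tr x3*tr x3*tr x5*tr x6*tr x9 + tr x2*tr x3*tr x3*tr x5*tr x9*tr x9 + tr x2*tr x3*tr x3*tr x6*tr x8*tr x9 + tr x2*tr x3*tr x3*tr x8*tr x9*tr x9 + tr x2*tr x3*tr x6*tr x7*tr x8*tr x9 + tr x2*tr x3*tr x6*tr x7*tr x8*tr x9 + tr x2*tr x3*tr x7*tr x8*tr x9*tr x9 + tr x2*tr x3*tr x7*tr x8*tr x9*tr x9 + tr x2*tr x6*tr x7*tr x7*tr x8*tr x9 + tr x2*tr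 x7*tr x7*tr x8*tr x9*tr x9 + tr x5*tr x6*tr x7*tr x7*tr x8*tr x9 + tr x5*tr x7*tr x7*tr x8*tr x9*tr x9 := by
    simp only [← tr_add, ← tr_min]; exact ⟨_, rfl⟩
  refine ⟨p1, p2, p3, p4, p5, p6, p7, p8, p9, p10, p11, p12, p13, p14, ?_, ?_, ?_, ?_, ?_, ?_, ?_, ?_, ?_, ?_, ?_, ?_, ?_, ?_, ?_, ?_, ?_, ?_, ?_, ?_⟩
  · rw [minEq2_iff]; simp only [tr_add, tr_zero, h1]; try ring
  · rw [minEq3_iff]; simp only [tr_add, tr_zero, h1, h2]; try ring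
  · rw [minEq4_iff]; simp only [tr_add, tr_zero, h1, h3]; try ring
  · rw [minEq3_iff]; simp only [tr_add, tr_zero, h1, h2, h4]; try ring
  · rw [minEq4_iff]; simp only [tr_add, tr_zero, h1, h2, h5]; try ring
  · rw [minEq2_iff]; simp only [tr_add, tr_zero, h1, h3, h5, h6]; try ring
  · rw [minEq2_iff]; simp only [tr_add, tr_zero, h5, h6, h7]; try ring
  · rw [minEq3_iff]; simp only [tr_add, tr_zero, h2, h3, h4, h5, h7, h8]; try ring
  · rw [minEq4_iff]; simp only [tr_add, tr_zero, h2, h3, h4, h5, h7, h9]; try ring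
  · rw [minEq2_iff]; simp only [tr_add, tr_zero, h3, h6, h9, h10]; try ring
  · rw [minEq2_iff]; simp only [tr_add, tr_zero, h11]; try ring
  · rw [minEq3_iff]; simp only [tr_add, tr_zero, h11, h12]; try ring
  · rw [minEq4_iff]; simp only [tr_add, tr_zero, h11, h13]; try ring
  · rw [minEq2_iff]; simp only [tr_add, tr_zero, h10, h13]; try ring
  · rw [minEq2_iff]; simp only [tr_add, tr_zero, h10, h11, h13, h14]; try ring
  · rw [minEq3_iff]; simp only [tr_add, tr_zero, h8, h12, h13, h14]; try ring
  · rw [minEq4_iff]; simp only [tr_add, tr_zero, h9, h12, h13, h14]; try ring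
  · rw [minEq3_iff]; simp only [tr_add, tr_zero, h4, h8, h11, h12, h14]; try ring
  · rw [minEq4_iff]; simp only [tr_add, tr_zero, h7, h8, h11, h12, h14]; try ring
  · rw [minEq2_iff]; simp only [tr_add, tr_zero, h6, h7, h9, h10, h14]; try ring

theorem vec9_eta (v : Fin 9 → ℕ) : v = ![v 0, v 1, v 2, v 3, v 4, v 5, v 6, v 7, v 8] := by
  funext i; fin_cases i <;> rfl

theorem step_249 {y1 y2 y3 y4 y5 y6 y7 y8 y9 a b c : ℕ}
    (h : combR (y2, y4, y9) = (a, b, c)) :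
    app3 combR 1 3 8 ![y1, y2, y3, y4, y5, y6, y7, y8, y9] = ![y1, a, y3, b, y5, y6, y7, y8, c] := by
  funext i; fin_cases i <;> simp [app3, h]

theorem step_258 {y1 y2 y3 y4 y5 y6 y7 y8 y9 a b c : ℕ}
    (h : combR (y2, y5, y8) = (a, b, c)) :
    app3 combR 1 4 7 ![y1, y2, y3, y4, y5, y6, y7, y8, y9] = ![y1, a, y3, y4, b, y6, y7, c, y9] := by
  funext i; fin_cases i <;> simp [app3, h]

theorem step_456 {y1 y2 y3 y4 y5 y6 y7 y8 y9 a b c : ℕ}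
    (h : combR (y4, y5, y6) = (a, b, c)) :
    app3 combR 3 4 5 ![y1, y2, y3, y4, y5, y6, y7, y8, y9] = ![y1, y2, y3, a, b, c, y7, y8, y9] := by
  funext i; fin_cases i <;> simp [app3, h]

theorem step_689 {y1 y2 y3 y4 y5 y6 y7 y8 y9 a b c : ℕ}
    (h : combR (y6, y8, y9) = (a, b, c)) :
    app3 combR 5 7 8 ![y1, y2, y3, y4, y5, y6, y7, y8, y9] = ![y1, y2, y3, y4, y5, a, y7, b, c] := by
  funext i; fin_cases i <;> simp [app3, h]

theorem step_1236 {y1 y2 y3 y4 y5 y6 y7 y8 y9 a b c d : ℕ}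
    (h : combK (y1, y2, y3, y6) = (a, b, c, d)) :
    app4 combK 0 1 2 5 ![y1, y2, y3, y4, y5, y6, y7, y8, y9] = ![a, b, c, y4, y5, d, y7, y8, y9] := by
  funext i; fin_cases i <;> simp [app4, h]

theorem step_1478 {y1 y2 y3 y4 y5 y6 y7 y8 y9 a b c d : ℕ}
    (h : combK (y1, y4, y7, y8) = (a, b, c, d)) :
    app4 combK 0 3 6 7 ![y1, y2, y3, y4, y5, y6, y7, y8, y9] = ![a, y2, y3, b, y5, y6, c, d, y9] := by
  funext i; fin_cases i <;> simp [app4, h]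

theorem step_3579 {y1 y2 y3 y4 y5 y6 y7 y8 y9 a b c d : ℕ}
    (h : combK (y3, y5, y7, y9) = (a, b, c, d)) :
    app4 combK 2 4 6 8 ![y1, y2, y3, y4, y5, y6, y7, y8, y9] = ![y1, y2, a, y4, b, y6, c, y8, d] := by
  funext i; fin_cases i <;> simp [app4, h]

theorem combRK_3d_reflection_C3 :
    app3 combR 5 7 8 ∘ app4 combK 2 4 6 8 ∘ app3 combR 1 3 8 ∘ app3 combR 1 4 7 ∘
        app4 combK 0 3 6 7 ∘ app4 combK 0 1 2 5 ∘ app3 combR 3 4 5 =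
      app3 combR 3 4 5 ∘ app4 combK 0 1 2 5 ∘ app4 combK 0 3 6 7 ∘ app3 combR 1 4 7 ∘
        app3 combR 1 3 8 ∘ app4 combK 2 4 6 8 ∘
        (app3 combR 5 7 8 : (Fin 9 → ℕ) → Fin 9 → ℕ) := by
  funext v
  rw [vec9_eta v]
  generalize v 0 = x1, v 1 = x2, v 2 = x3, v 3 = x4, v 4 = x5, v 5 = x6, v 6 = x7, v 7 = x8,
    v 8 = x9
  simp only [Function.comp_apply]
  obtain ⟨p1, p2, p3, p4, p5, p6, p7, p8, p9, p10, p11, p12, p13, p14, r0, r1, r2, r3, r4, r5, r6, r7, r8, r9, r10, r11, r12, r13, r14, r15, r16, r17, r18, r19⟩ := trop_exists x1 x2 x3 x4 x5 x6 x7 x8 x9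
  obtain ⟨l1a, l1b, l1c, el1, ml1, ul1, vl1⟩ := combR_spec x4 x5 x6
  have ql1 := ml1.shift r0 (k := 0) (by (try simp only []); try ring) (by (try simp only []); try ring)
  have kl1a : (l1a : ℤ) = x4 + x5 + (-1)*p1 := by (try simp only [ul1, vl1, ql1]); try ring
  have kl1b : (l1b : ℤ) = p1 := by (try simp only [ul1, vl1, ql1]); try ring
  have kl1c : (l1c : ℤ) = x5 + x6 + (-1)*p1 := by (try simp only [ul1, vl1, ql1]); try ring
  clear ml1 ul1 vl1 ql1
  obtain ⟨l2a, l2b, l2c, l2d, Pl2, Ql2, el2, ml2, nl2, ul2, vl2, wl2, zl2⟩ := combK_spec x1 x2 x3 l1c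
  have ql2 := ml2.shift r1 (k := (-1)*p1) (by (try simp only [kl1c]); try ring) (by (try simp only [kl1c]); try ring) (by (try simp only [kl1c]); try ring)
  have sl2 := nl2.shift r2 (k := (-1)*p1) (by (try simp only [kl1c]); try ring) (by (try simp only [kl1c]); try ring) (by (try simp only [kl1c]); try ring) (by (try simp only [kl1c]); try ring)
  have kl2a : (l2a : ℤ) = x1 + x2 + x3 + p1 + (-1)*p2 := by (try simp only [ul2, vl2, wl2, zl2, ql2, sl2, kl1c]); try ring
  have kl2b : (l2b : ℤ) = (-1)*p1 + (2)*p2 + (-1)*p3 := by (try simp only [ul2, vl2, wl2, zl2, ql2, sl2, kl1c]); try ring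
  have kl2c : (l2c : ℤ) = (-1)*p2 + p3 := by (try simp only [ul2, vl2, wl2, zl2, ql2, sl2, kl1c]); try ring
  have kl2d : (l2d : ℤ) = x2 + (2)*x3 + x5 + x6 + (-1)*p3 := by (try simp only [ul2, vl2, wl2, zl2, ql2, sl2, kl1c]); try ring
  clear ml2 nl2 ul2 vl2 wl2 zl2 ql2 sl2
  obtain ⟨l3a, l3b, l3c, l3d, Pl3, Ql3, el3, ml3, nl3, ul3, vl3, wl3, zl3⟩ := combK_spec l2a l1a x7 x8
  have ql3 := ml3.shift r3 (k := (-1)*p2) (by (try simp only [kl2a, kl1a]); try ring) (by (try simp only [kl2a, kl1a]); try ring) (by (try simp only [kl2a, kl1a]); try ring)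
  have sl3 := nl3.shift r4 (k := (-2)*p2) (by (try simp only [kl2a, kl1a]); try ring) (by (try simp only [kl2a, kl1a]); try ring) (by (try simp only [kl2a, kl1a]); try ring) (by (try simp only [kl2a, kl1a]); try ring)
  have kl3a : (l3a : ℤ) = x1 + x2 + x3 + x4 + x5 + x7 + (-1)*p4 := by (try simp only [ul3, vl3, wl3, zl3, ql3, sl3, kl2a, kl1a]); try ring
  have kl3b : (l3b : ℤ) = (2)*p4 + (-1)*p5 := by (try simp only [ul3, vl3, wl3, zl3, ql3, sl3, kl2a, kl1a]); try ring
  have kl3c : (l3c : ℤ) = (-1)*p2 + (-1)*p4 + p5 := by (try simp only [ul3, vl3, wl3, zl3, ql3, sl3, kl2a, kl1a]); try ring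
  have kl3d : (l3d : ℤ) = x4 + x5 + (2)*x7 + x8 + (-1)*p1 + (2)*p2 + (-1)*p5 := by (try simp only [ul3, vl3, wl3, zl3, ql3, sl3, kl2a, kl1a]); try ring
  clear ml3 nl3 ul3 vl3 wl3 zl3 ql3 sl3
  obtain ⟨l4a, l4b, l4c, el4, ml4, ul4, vl4⟩ := combR_spec l2b l1b l3d
  have ql4 := ml4.shift r5 (k := (-1)*p1 + (2)*p2 + (-1)*p3 + (-1)*p5) (by (try simp only [kl2b, kl1b, kl3d]); try ring) (by (try simp only [kl2b, kl1b, kl3d]); try ring)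
  have kl4a : (l4a : ℤ) = p5 + (-1)*p6 := by (try simp only [ul4, vl4, ql4, kl2b, kl1b, kl3d]); try ring
  have kl4b : (l4b : ℤ) = (2)*p2 + (-1)*p3 + (-1)*p5 + p6 := by (try simp only [ul4, vl4, ql4, kl2b, kl1b, kl3d]); try ring
  have kl4c : (l4c : ℤ) = x4 + x5 + (2)*x7 + x8 + p3 + (-1)*p6 := by (try simp only [ul4, vl4, ql4, kl2b, kl1b, kl3d]); try ring
  clear ml4 ul4 vl4 ql4
  obtain ⟨l5a, l5b, l5c, el5, ml5, ul5, vl5⟩ := combR_spec l4a l3b x9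
  have ql5 := ml5.shift r6 (k := (-1)*p6) (by (try simp only [kl4a, kl3b]); try ring) (by (try simp only [kl4a, kl3b]); try ring)
  have kl5a : (l5a : ℤ) = (2)*p4 + (-1)*p7 := by (try simp only [ul5, vl5, ql5, kl4a, kl3b]); try ring
  have kl5b : (l5b : ℤ) = (-1)*p6 + p7 := by (try simp only [ul5, vl5, ql5, kl4a, kl3b]); try ring
  have kl5c : (l5c : ℤ) = x9 + (2)*p4 + (-1)*p5 + p6 + (-1)*p7 := by (try simp only [ul5, vl5, ql5, kl4a, kl3b]); try ring
  clear ml5 ul5 vl5 ql5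
  obtain ⟨l6a, l6b, l6c, l6d, Pl6, Ql6, el6, ml6, nl6, ul6, vl6, wl6, zl6⟩ := combK_spec l2c l4b l3c l5c
  have ql6 := ml6.shift r7 (k := (-1)*p2 + (-1)*p5 + p6 + (-1)*p7) (by (try simp only [kl2c, kl4b, kl3c, kl5c]); try ring) (by (try simp only [kl2c, kl4b, kl3c, kl5c]); try ring) (by (try simp only [kl2c, kl4b, kl3c, kl5c]); try ring)
  have sl6 := nl6.shift r8 (k := (-2)*p2 + (-1)*p5 + p6 + (-1)*p7) (by (try simp only [kl2c, kl4b, kl3c, kl5c]); try ring) (by (try simp only [kl2c, kl4b, kl3c, kl5c]); try ring) (by (try simp only [kl2c, kl4b, kl3c, kl5c]); try ring) (by (try simp only [kl2c, kl4b, kl3c, kl5c]); try ring)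
  have kl6a : (l6a : ℤ) = (-1)*p4 + p7 + (-1)*p8 := by (try simp only [ul6, vl6, wl6, zl6, ql6, sl6, kl2c, kl4b, kl3c, kl5c]); try ring
  have kl6b : (l6b : ℤ) = p6 + (-1)*p7 + (2)*p8 + (-1)*p9 := by (try simp only [ul6, vl6, wl6, zl6, ql6, sl6, kl2c, kl4b, kl3c, kl5c]); try ring
  have kl6c : (l6c : ℤ) = (-1)*p8 + p9 := by (try simp only [ul6, vl6, wl6, zl6, ql6, sl6, kl2c, kl4b, kl3c, kl5c]); try ring
  have kl6d : (l6d : ℤ) = x9 + (-1)*p3 + p6 + (-1)*p9 := by (try simp only [ul6, vl6, wl6, zl6, ql6, sl6, kl2c, kl4b, kl3c, kl5c]); try ring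
  clear ml6 nl6 ul6 vl6 wl6 zl6 ql6 sl6
  obtain ⟨l7a, l7b, l7c, el7, ml7, ul7, vl7⟩ := combR_spec l2d l4c l6d
  have ql7 := ml7.shift r9 (k := (-1)*p3 + (-1)*p9) (by (try simp only [kl2d, kl4c, kl6d]); try ring) (by (try simp only [kl2d, kl4c, kl6d]); try ring)
  have kl7a : (l7a : ℤ) = x2 + (2)*x3 + x4 + (2)*x5 + x6 + (2)*x7 + x8 + (-1)*p6 + p9 + (-1)*p10 := by (try simp only [ul7, vl7, ql7, kl2d, kl4c, kl6d]); try ring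
  have kl7b : (l7b : ℤ) = (-1)*p9 + p10 := by (try simp only [ul7, vl7, ql7, kl2d, kl4c, kl6d]); try ring
  have kl7c : (l7c : ℤ) = x4 + x5 + (2)*x7 + x8 + x9 + (-1)*p10 := by (try simp only [ul7, vl7, ql7, kl2d, kl4c, kl6d]); try ring
  clear ml7 ul7 vl7 ql7
  rw [step_456 el1, step_1236 el2, step_1478 el3, step_258 el4, step_249 el5, step_3579 el6, step_689 el7]
  obtain ⟨r1a, r1b, r1c, er1, mr1, ur1, vr1⟩ := combR_spec x6 x8 x9
  have qr1 := mr1.shift r10 (k := 0) (by (try simp only []); try ring) (by (try simp only []); try ring)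
  have kr1a : (r1a : ℤ) = x6 + x8 + (-1)*p11 := by (try simp only [ur1, vr1, qr1]); try ring
  have kr1b : (r1b : ℤ) = p11 := by (try simp only [ur1, vr1, qr1]); try ring
  have kr1c : (r1c : ℤ) = x8 + x9 + (-1)*p11 := by (try simp only [ur1, vr1, qr1]); try ring
  clear mr1 ur1 vr1 qr1
  obtain ⟨r2a, r2b, r2c, r2d, Pr2, Qr2, er2, mr2, nr2, ur2, vr2, wr2, zr2⟩ := combK_spec x3 x5 x7 r1c
  have qr2 := mr2.shift r11 (k := (-1)*p11) (by (try simp only [kr1c]); try ring) (by (try simp only [kr1c]); try ring) (by (try simp only [kr1c]); try ring)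
  have sr2 := nr2.shift r12 (k := (-1)*p11) (by (try simp only [kr1c]); try ring) (by (try simp only [kr1c]); try ring) (by (try simp only [kr1c]); try ring) (by (try simp only [kr1c]); try ring)
  have kr2a : (r2a : ℤ) = x3 + x5 + x7 + p11 + (-1)*p12 := by (try simp only [ur2, vr2, wr2, zr2, qr2, sr2, kr1c]); try ring
  have kr2b : (r2b : ℤ) = (-1)*p11 + (2)*p12 + (-1)*p13 := by (try simp only [ur2, vr2, wr2, zr2, qr2, sr2, kr1c]); try ring
  have kr2c : (r2c : ℤ) = (-1)*p12 + p13 := by (try simp only [ur2, vr2, wr2, zr2, qr2, sr2, kr1c]); try ring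
  have kr2d : (r2d : ℤ) = x5 + (2)*x7 + x8 + x9 + (-1)*p13 := by (try simp only [ur2, vr2, wr2, zr2, qr2, sr2, kr1c]); try ring
  clear mr2 nr2 ur2 vr2 wr2 zr2 qr2 sr2
  obtain ⟨r3a, r3b, r3c, er3, mr3, ur3, vr3⟩ := combR_spec x2 x4 r2d
  have qr3 := mr3.shift r13 (k := (-1)*p13) (by (try simp only [kr2d]); try ring) (by (try simp only [kr2d]); try ring)
  have kr3a : (r3a : ℤ) = x2 + x4 + (-1)*p10 + p13 := by (try simp only [ur3, vr3, qr3, kr2d]); try ring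
  have kr3b : (r3b : ℤ) = p10 + (-1)*p13 := by (try simp only [ur3, vr3, qr3, kr2d]); try ring
  have kr3c : (r3c : ℤ) = x4 + x5 + (2)*x7 + x8 + x9 + (-1)*p10 := by (try simp only [ur3, vr3, qr3, kr2d]); try ring
  clear mr3 ur3 vr3 qr3
  obtain ⟨r4a, r4b, r4c, er4, mr4, ur4, vr4⟩ := combR_spec r3a r2b r1b
  have qr4 := mr4.shift r14 (k := (-1)*p10) (by (try simp only [kr3a, kr2b, kr1b]); try ring) (by (try simp only [kr3a, kr2b, kr1b]); try ring)
  have kr4a : (r4a : ℤ) = x2 + x4 + (-1)*p11 + (2)*p12 + (-1)*p14 := by (try simp only [ur4, vr4, qr4, kr3a, kr2b, kr1b]); try ring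
  have kr4b : (r4b : ℤ) = (-1)*p10 + p14 := by (try simp only [ur4, vr4, qr4, kr3a, kr2b, kr1b]); try ring
  have kr4c : (r4c : ℤ) = p10 + (2)*p12 + (-1)*p13 + (-1)*p14 := by (try simp only [ur4, vr4, qr4, kr3a, kr2b, kr1b]); try ring
  clear mr4 ur4 vr4 qr4
  obtain ⟨r5a, r5b, r5c, r5d, Pr5, Qr5, er5, mr5, nr5, ur5, vr5, wr5, zr5⟩ := combK_spec x1 r3b r2c r4c
  have qr5 := mr5.shift r15 (k := p10 + (-1)*p13 + (-1)*p14) (by (try simp only [kr3b, kr2c, kr4c]); try ring) (by (try simp only [kr3b, kr2c, kr4c]); try ring) (by (try simp only [kr3b, kr2c, kr4c]); try ring)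
  have sr5 := nr5.shift r16 (k := p10 + (-1)*p13 + (-1)*p14) (by (try simp only [kr3b, kr2c, kr4c]); try ring) (by (try simp only [kr3b, kr2c, kr4c]); try ring) (by (try simp only [kr3b, kr2c, kr4c]); try ring) (by (try simp only [kr3b, kr2c, kr4c]); try ring)
  have kr5a : (r5a : ℤ) = x1 + (-1)*p8 + (-1)*p12 + p14 := by (try simp only [ur5, vr5, wr5, zr5, qr5, sr5, kr3b, kr2c, kr4c]); try ring
  have kr5b : (r5b : ℤ) = (2)*p8 + (-1)*p9 + p10 + (-1)*p14 := by (try simp only [ur5, vr5, wr5, zr5, qr5, sr5, kr3b, kr2c, kr4c]); try ring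
  have kr5c : (r5c : ℤ) = (-1)*p8 + p9 := by (try simp only [ur5, vr5, wr5, zr5, qr5, sr5, kr3b, kr2c, kr4c]); try ring
  have kr5d : (r5d : ℤ) = (-1)*p9 + p10 := by (try simp only [ur5, vr5, wr5, zr5, qr5, sr5, kr3b, kr2c, kr4c]); try ring
  clear mr5 nr5 ur5 vr5 wr5 zr5 qr5 sr5
  obtain ⟨r6a, r6b, r6c, r6d, Pr6, Qr6, er6, mr6, nr6, ur6, vr6, wr6, zr6⟩ := combK_spec r5a r4a r2a r1a
  have qr6 := mr6.shift r17 (k := (-1)*p8 + (-1)*p11 + (-1)*p12) (by (try simp only [kr5a, kr4a, kr2a, kr1a]); try ring) (by (try simp only [kr5a, kr4a, kr2a, kr1a]); try ring) (by (try simp only [kr5a, kr4a, kr2a, kr1a]); try ring)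
  have sr6 := nr6.shift r18 (k := (-2)*p8 + (-1)*p11 + (-2)*p12) (by (try simp only [kr5a, kr4a, kr2a, kr1a]); try ring) (by (try simp only [kr5a, kr4a, kr2a, kr1a]); try ring) (by (try simp only [kr5a, kr4a, kr2a, kr1a]); try ring) (by (try simp only [kr5a, kr4a, kr2a, kr1a]); try ring)
  have kr6a : (r6a : ℤ) = x1 + x2 + x3 + x4 + x5 + x7 + (-1)*p4 := by (try simp only [ur6, vr6, wr6, zr6, qr6, sr6, kr5a, kr4a, kr2a, kr1a]); try ring
  have kr6b : (r6b : ℤ) = (2)*p4 + (-1)*p7 := by (try simp only [ur6, vr6, wr6, zr6, qr6, sr6, kr5a, kr4a, kr2a, kr1a]); try ring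
  have kr6c : (r6c : ℤ) = (-1)*p4 + p7 + (-1)*p8 := by (try simp only [ur6, vr6, wr6, zr6, qr6, sr6, kr5a, kr4a, kr2a, kr1a]); try ring
  have kr6d : (r6d : ℤ) = x2 + (2)*x3 + x4 + (2)*x5 + x6 + (2)*x7 + x8 + (-1)*p7 + (2)*p8 + (-1)*p14 := by (try simp only [ur6, vr6, wr6, zr6, qr6, sr6, kr5a, kr4a, kr2a, kr1a]); try ring
  clear mr6 nr6 ur6 vr6 wr6 zr6 qr6 sr6
  obtain ⟨r7a, r7b, r7c, er7, mr7, ur7, vr7⟩ := combR_spec r5b r4b r6d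
  have qr7 := mr7.shift r19 (k := (-1)*p7 + (2)*p8 + (-1)*p9 + (-1)*p14) (by (try simp only [kr5b, kr4b, kr6d]); try ring) (by (try simp only [kr5b, kr4b, kr6d]); try ring)
  have kr7a : (r7a : ℤ) = (-1)*p6 + p7 := by (try simp only [ur7, vr7, qr7, kr5b, kr4b, kr6d]); try ring
  have kr7b : (r7b : ℤ) = p6 + (-1)*p7 + (2)*p8 + (-1)*p9 := by (try simp only [ur7, vr7, qr7, kr5b, kr4b, kr6d]); try ring
  have kr7c : (r7c : ℤ) = x2 + (2)*x3 + x4 + (2)*x5 + x6 + (2)*x7 + x8 + (-1)*p6 + p9 + (-1)*p10 := by (try simp only [ur7, vr7, qr7, kr5b, kr4b, kr6d]); try ring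
  clear mr7 ur7 vr7 qr7
  rw [step_689 er1, step_3579 er2, step_249 er3, step_258 er4, step_1478 er5, step_1236 er6, step_456 er7]
  have f1 : l3a = r6a := by zify; linarith
  have f2 : l5a = r6b := by zify; linarith
  have f3 : l6a = r6c := by zify; linarith
  have f4 : l5b = r7a := by zify; linarith
  have f5 : l6b = r7b := by zify; linarith
  have f6 : l7a = r7c := by zify; linarith
  have f7 : l6c = r5c := by zify; linarith
  have f8 : l7b = r5d := by zify; linarith
  have f9 : l7c = r3c := by zify; linarith
  rw [f1, f2, f3, f4, f5, f6, f7, f8, f9]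
end

section
/- The combinatorial R-map and K-map satisfy the 3D reflection equation of type B₃ on ℕ⁹: as maps from ℕ⁹ to ℕ⁹, R₍₆,₈,₉₎ ∘ K₍₉,₇,₅,₃₎ ∘ R₍₂,₄,₉₎ ∘ R₍₂,₅,₈₎ ∘ K₍₈,₇,₄,₁₎ ∘ K₍₆,₃,₂,₁₎ ∘ R₍₄,₅,₆₎ = R₍₄,₅,₆₎ ∘ K₍₆,₃,₂,₁₎ ∘ K₍₈,₇,₄,₁₎ ∘ R₍₂,₅,₈₎ ∘ R₍₂,₄,₉₎ ∘ K₍₉,₇,₅,₃₎ ∘ R₍₆,₈,₉₎ (here K is applied at the listed positions read and written in the listed, descending, order). -/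
/-! Geometric lift: the birational maps `gR`, `gK` transport factorizations of unipotent matrices
(in `Sp₆`); their uniqueness gives the identity over positive reals; growth rates tropicalize. -/

abbrev V6 := ℝ × ℝ × ℝ × ℝ × ℝ × ℝ

def E1 (t : ℝ) : V6 → V6 := fun (a, b, c, d, e, f) => (a + t * b, b, c, d, e + t * f, f)
def E2 (t : ℝ) : V6 → V6 := fun (a, b, c, d, e, f) => (a, b + t * c, c, d + t * e, e, f)
def E3 (t : ℝ) : V6 → V6 := fun (a, b, c, d, e, f) => (a, b, c + t * d, d, e, f)

noncomputable def gR : ℝ × ℝ × ℝ → ℝ × ℝ × ℝ := fun p =>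
  (p.1 * p.2.1 / (p.1 + p.2.2), p.1 + p.2.2, p.2.1 * p.2.2 / (p.1 + p.2.2))

noncomputable def q1 (a b c d : ℝ) : ℝ := a * b + (a + c) * d
noncomputable def q2 (a b c d : ℝ) : ℝ := a * a * b + (a + c) * (a + c) * d

noncomputable def gK : ℝ × ℝ × ℝ × ℝ → ℝ × ℝ × ℝ × ℝ := fun p =>
  let a := p.1; let b := p.2.1; let c := p.2.2.1; let d := p.2.2.2
  (a * b * c / q1 a b c d, q1 a b c d * q1 a b c d / q2 a b c d,
    q2 a b c d / q1 a b c d, b * c * c * d / q2 a b c d)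

theorem comm13 (s t : ℝ) (x : V6) : E1 s (E3 t x) = E3 t (E1 s x) := rfl

theorem r121 {a b c : ℝ} (ha : 0 < a) (hc : 0 < c) (x : V6) :
    E1 c (E2 b (E1 a x)) =
      E2 (gR (a, b, c)).1 (E1 (gR (a, b, c)).2.1 (E2 (gR (a, b, c)).2.2 x)) := by
  obtain ⟨x1, x2, x3, x4, x5, x6⟩ := x
  have h : a + c ≠ 0 := by positivity
  simp only [E1, E2, gR]
  refine Prod.ext ?_ (Prod.ext ?_ (Prod.ext ?_ (Prod.ext ?_ (Prod.ext ?_ ?_)))) <;> dsimp only <;> first | rfl | ring1 | (field_simp; ring)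

theorem r212 {a b c : ℝ} (ha : 0 < a) (hc : 0 < c) (x : V6) :
    E2 c (E1 b (E2 a x)) =
      E1 (gR (a, b, c)).1 (E2 (gR (a, b, c)).2.1 (E1 (gR (a, b, c)).2.2 x)) := by
  obtain ⟨x1, x2, x3, x4, x5, x6⟩ := x
  have h : a + c ≠ 0 := by positivity
  simp only [E1, E2, gR]
  refine Prod.ext ?_ (Prod.ext ?_ (Prod.ext ?_ (Prod.ext ?_ (Prod.ext ?_ ?_)))) <;> dsimp only <;> first | rfl | ring1 | (field_simp; ring)

theorem k2323 {a b c d : ℝ} (ha : 0 < a) (hb : 0 < b) (hc : 0 < c) (hd : 0 < d) (x : V6) :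
    E2 a (E3 b (E2 c (E3 d x))) =
      E3 (gK (a, b, c, d)).2.2.2 (E2 (gK (a, b, c, d)).2.2.1
        (E3 (gK (a, b, c, d)).2.1 (E2 (gK (a, b, c, d)).1 x))) := by
  obtain ⟨x1, x2, x3, x4, x5, x6⟩ := x
  have h1 : q1 a b c d ≠ 0 := by unfold q1; positivity
  have h2 : q2 a b c d ≠ 0 := by unfold q2; positivity
  simp only [E2, E3, gK]
  refine Prod.ext ?_ (Prod.ext ?_ (Prod.ext ?_ (Prod.ext ?_ (Prod.ext ?_ ?_)))) <;> dsimp only <;> first | rfl | ring1 | (field_simp; simp only [q1, q2]; ring)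

def Pos (v : Fin 9 → ℝ) : Prop := ∀ i, 0 < v i

theorem pos_R {v : Fin 9 → ℝ} (h : Pos v) (i j k : Fin 9) : Pos (app3 gR i j k v) := by
  intro m
  have := h i; have := h j; have := h k; have := h m
  simp only [app3, gR]
  split_ifs <;> positivity

theorem pos_K {v : Fin 9 → ℝ} (h : Pos v) (i j k l : Fin 9) : Pos (app4 gK i j k l v) := by
  intro m
  have := h i; have := h j; have := h k; have := h l; have := h m
  simp only [app4, gK, q1, q2]
  split_ifs <;> positivity

/-- The word of the longest element at the start. -/
def W0 (v : Fin 9 → ℝ) (x : V6) : V6 :=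
  E1 (v 8) (E2 (v 7) (E3 (v 6) (E1 (v 5) (E2 (v 4) (E1 (v 3) (E3 (v 2) (E2 (v 1) (E3 (v 0) x))))))))

/-- The word at the end. -/
def W1 (v : Fin 9 → ℝ) (x : V6) : V6 :=
  E3 (v 0) (E2 (v 1) (E1 (v 3) (E3 (v 2) (E2 (v 4) (E3 (v 6) (E1 (v 5) (E2 (v 7) (E1 (v 8) x))))))))

theorem lhs_s0 {v : Fin 9 → ℝ} (h : Pos v) (x : V6) :
    E1 (v 8) (E2 (v 7) (E3 (v 6) (E1 (v 5) (E2 (v 4) (E1 (v 3) (E3 (v 2) (E2 (v 1) (E3 (v 0) x)))))))) =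
      E1 ((app3 gR 3 4 5 v) 8) (E2 ((app3 gR 3 4 5 v) 7) (E3 ((app3 gR 3 4 5 v) 6) (E2 ((app3 gR 3 4 5 v) 3) (E1 ((app3 gR 3 4 5 v) 4) (E2 ((app3 gR 3 4 5 v) 5) (E3 ((app3 gR 3 4 5 v) 2) (E2 ((app3 gR 3 4 5 v) 1) (E3 ((app3 gR 3 4 5 v) 0) x)))))))) := by
  rw [r121 (h 3) (h 5)]
  rfl

theorem lhs_s1 {v : Fin 9 → ℝ} (h : Pos v) (x : V6) :
    E1 (v 8) (E2 (v 7) (E3 (v 6) (E2 (v 3) (E1 (v 4) (E2 (v 5) (E3 (v 2) (E2 (v 1) (E3 (v 0) x)))))))) =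
      E1 ((app4 gK 5 2 1 0 v) 8) (E2 ((app4 gK 5 2 1 0 v) 7) (E3 ((app4 gK 5 2 1 0 v) 6) (E2 ((app4 gK 5 2 1 0 v) 3) (E1 ((app4 gK 5 2 1 0 v) 4) (E3 ((app4 gK 5 2 1 0 v) 0) (E2 ((app4 gK 5 2 1 0 v) 1) (E3 ((app4 gK 5 2 1 0 v) 2) (E2 ((app4 gK 5 2 1 0 v) 5) x)))))))) := by
  rw [k2323 (h 5) (h 2) (h 1) (h 0)]
  rfl

theorem lhs_s2 {v : Fin 9 → ℝ} (h : Pos v) (x : V6) :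
    E1 (v 8) (E2 (v 7) (E3 (v 6) (E2 (v 3) (E3 (v 0) (E1 (v 4) (E2 (v 1) (E3 (v 2) (E2 (v 5) x)))))))) =
      E1 ((app4 gK 7 6 3 0 v) 8) (E3 ((app4 gK 7 6 3 0 v) 0) (E2 ((app4 gK 7 6 3 0 v) 3) (E3 ((app4 gK 7 6 3 0 v) 6) (E2 ((app4 gK 7 6 3 0 v) 7) (E1 ((app4 gK 7 6 3 0 v) 4) (E2 ((app4 gK 7 6 3 0 v) 1) (E3 ((app4 gK 7 6 3 0 v) 2) (E2 ((app4 gK 7 6 3 0 v) 5) x)))))))) := by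
  rw [k2323 (h 7) (h 6) (h 3) (h 0)]
  rfl

theorem lhs_s3 {v : Fin 9 → ℝ} (h : Pos v) (x : V6) :
    E1 (v 8) (E3 (v 0) (E2 (v 3) (E3 (v 6) (E2 (v 7) (E1 (v 4) (E2 (v 1) (E3 (v 2) (E2 (v 5) x)))))))) =
      E1 ((app3 gR 1 4 7 v) 8) (E3 ((app3 gR 1 4 7 v) 0) (E2 ((app3 gR 1 4 7 v) 3) (E3 ((app3 gR 1 4 7 v) 6) (E1 ((app3 gR 1 4 7 v) 1) (E2 ((app3 gR 1 4 7 v) 4) (E1 ((app3 gR 1 4 7 v) 7) (E3 ((app3 gR 1 4 7 v) 2) (E2 ((app3 gR 1 4 7 v) 5) x)))))))) := by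
  rw [r212 (h 1) (h 7)]
  rfl

theorem lhs_s4 {v : Fin 9 → ℝ} (h : Pos v) (x : V6) :
    E3 (v 0) (E1 (v 8) (E2 (v 3) (E1 (v 1) (E3 (v 6) (E2 (v 4) (E1 (v 7) (E3 (v 2) (E2 (v 5) x)))))))) =
      E3 ((app3 gR 1 3 8 v) 0) (E2 ((app3 gR 1 3 8 v) 1) (E1 ((app3 gR 1 3 8 v) 3) (E2 ((app3 gR 1 3 8 v) 8) (E3 ((app3 gR 1 3 8 v) 6) (E2 ((app3 gR 1 3 8 v) 4) (E1 ((app3 gR 1 3 8 v) 7) (E3 ((app3 gR 1 3 8 v) 2) (E2 ((app3 gR 1 3 8 v) 5) x)))))))) := by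
  rw [r121 (h 1) (h 8)]
  rfl

theorem lhs_s5 {v : Fin 9 → ℝ} (h : Pos v) (x : V6) :
    E3 (v 0) (E2 (v 1) (E1 (v 3) (E2 (v 8) (E3 (v 6) (E2 (v 4) (E3 (v 2) (E1 (v 7) (E2 (v 5) x)))))))) =
      E3 ((app4 gK 8 6 4 2 v) 0) (E2 ((app4 gK 8 6 4 2 v) 1) (E1 ((app4 gK 8 6 4 2 v) 3) (E3 ((app4 gK 8 6 4 2 v) 2) (E2 ((app4 gK 8 6 4 2 v) 4) (E3 ((app4 gK 8 6 4 2 v) 6) (E2 ((app4 gK 8 6 4 2 v) 8) (E1 ((app4 gK 8 6 4 2 v) 7) (E2 ((app4 gK 8 6 4 2 v) 5) x)))))))) := by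
  rw [k2323 (h 8) (h 6) (h 4) (h 2)]
  rfl

theorem lhs_s6 {v : Fin 9 → ℝ} (h : Pos v) (x : V6) :
    E3 (v 0) (E2 (v 1) (E1 (v 3) (E3 (v 2) (E2 (v 4) (E3 (v 6) (E2 (v 8) (E1 (v 7) (E2 (v 5) x)))))))) =
      E3 ((app3 gR 5 7 8 v) 0) (E2 ((app3 gR 5 7 8 v) 1) (E1 ((app3 gR 5 7 8 v) 3) (E3 ((app3 gR 5 7 8 v) 2) (E2 ((app3 gR 5 7 8 v) 4) (E3 ((app3 gR 5 7 8 v) 6) (E1 ((app3 gR 5 7 8 v) 5) (E2 ((app3 gR 5 7 8 v) 7) (E1 ((app3 gR 5 7 8 v) 8) x)))))))) := by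
  rw [r212 (h 5) (h 8)]
  rfl

theorem lhs {v : Fin 9 → ℝ} (h : Pos v) (x : V6) :
    W0 v x = W1 (app3 gR 5 7 8 (app4 gK 8 6 4 2 (app3 gR 1 3 8 (app3 gR 1 4 7 (app4 gK 7 6 3 0 (app4 gK 5 2 1 0 (app3 gR 3 4 5 v))))))) x := by
  have h1 := pos_R h 3 4 5
  have h2 := pos_K h1 5 2 1 0
  have h3 := pos_K h2 7 6 3 0
  have h4 := pos_R h3 1 4 7
  have h5 := pos_R h4 1 3 8
  have h6 := pos_K h5 8 6 4 2
  have h7 := pos_R h6 5 7 8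
  refine Eq.trans ?_ (Eq.trans (lhs_s0 h x) ?_)
  · rfl
  refine Eq.trans (show _ = _ from rfl) (Eq.trans (lhs_s1 h1 x) ?_)
  refine Eq.trans (show _ = _ from rfl) (Eq.trans (lhs_s2 h2 x) ?_)
  refine Eq.trans (show _ = _ from rfl) (Eq.trans (lhs_s3 h3 x) ?_)
  refine Eq.trans (show _ = _ from rfl) (Eq.trans (lhs_s4 h4 x) ?_)
  refine Eq.trans (show _ = _ from rfl) (Eq.trans (lhs_s5 h5 x) ?_)
  refine Eq.trans (show _ = _ from rfl) (Eq.trans (lhs_s6 h6 x) ?_)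
  rfl

theorem rhs_s0 {v : Fin 9 → ℝ} (h : Pos v) (x : V6) :
    E1 (v 8) (E2 (v 7) (E1 (v 5) (E3 (v 6) (E2 (v 4) (E1 (v 3) (E3 (v 2) (E2 (v 1) (E3 (v 0) x)))))))) =
      E2 ((app3 gR 5 7 8 v) 5) (E1 ((app3 gR 5 7 8 v) 7) (E2 ((app3 gR 5 7 8 v) 8) (E3 ((app3 gR 5 7 8 v) 6) (E2 ((app3 gR 5 7 8 v) 4) (E1 ((app3 gR 5 7 8 v) 3) (E3 ((app3 gR 5 7 8 v) 2) (E2 ((app3 gR 5 7 8 v) 1) (E3 ((app3 gR 5 7 8 v) 0) x)))))))) := by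
  rw [r121 (h 5) (h 8)]
  rfl

theorem rhs_s1 {v : Fin 9 → ℝ} (h : Pos v) (x : V6) :
    E2 (v 5) (E1 (v 7) (E2 (v 8) (E3 (v 6) (E2 (v 4) (E3 (v 2) (E1 (v 3) (E2 (v 1) (E3 (v 0) x)))))))) =
      E2 ((app4 gK 8 6 4 2 v) 5) (E1 ((app4 gK 8 6 4 2 v) 7) (E3 ((app4 gK 8 6 4 2 v) 2) (E2 ((app4 gK 8 6 4 2 v) 4) (E3 ((app4 gK 8 6 4 2 v) 6) (E2 ((app4 gK 8 6 4 2 v) 8) (E1 ((app4 gK 8 6 4 2 v) 3) (E2 ((app4 gK 8 6 4 2 v) 1) (E3 ((app4 gK 8 6 4 2 v) 0) x)))))))) := by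
  rw [k2323 (h 8) (h 6) (h 4) (h 2)]
  rfl

theorem rhs_s2 {v : Fin 9 → ℝ} (h : Pos v) (x : V6) :
    E2 (v 5) (E1 (v 7) (E3 (v 2) (E2 (v 4) (E3 (v 6) (E2 (v 8) (E1 (v 3) (E2 (v 1) (E3 (v 0) x)))))))) =
      E2 ((app3 gR 1 3 8 v) 5) (E1 ((app3 gR 1 3 8 v) 7) (E3 ((app3 gR 1 3 8 v) 2) (E2 ((app3 gR 1 3 8 v) 4) (E3 ((app3 gR 1 3 8 v) 6) (E1 ((app3 gR 1 3 8 v) 1) (E2 ((app3 gR 1 3 8 v) 3) (E1 ((app3 gR 1 3 8 v) 8) (E3 ((app3 gR 1 3 8 v) 0) x)))))))) := by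
  rw [r212 (h 1) (h 8)]
  rfl

theorem rhs_s3 {v : Fin 9 → ℝ} (h : Pos v) (x : V6) :
    E2 (v 5) (E3 (v 2) (E1 (v 7) (E2 (v 4) (E1 (v 1) (E3 (v 6) (E2 (v 3) (E1 (v 8) (E3 (v 0) x)))))))) =
      E2 ((app3 gR 1 4 7 v) 5) (E3 ((app3 gR 1 4 7 v) 2) (E2 ((app3 gR 1 4 7 v) 1) (E1 ((app3 gR 1 4 7 v) 4) (E2 ((app3 gR 1 4 7 v) 7) (E3 ((app3 gR 1 4 7 v) 6) (E2 ((app3 gR 1 4 7 v) 3) (E1 ((app3 gR 1 4 7 v) 8) (E3 ((app3 gR 1 4 7 v) 0) x)))))))) := by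
  rw [r121 (h 1) (h 7)]
  rfl

theorem rhs_s4 {v : Fin 9 → ℝ} (h : Pos v) (x : V6) :
    E2 (v 5) (E3 (v 2) (E2 (v 1) (E1 (v 4) (E2 (v 7) (E3 (v 6) (E2 (v 3) (E3 (v 0) (E1 (v 8) x)))))))) =
      E2 ((app4 gK 7 6 3 0 v) 5) (E3 ((app4 gK 7 6 3 0 v) 2) (E2 ((app4 gK 7 6 3 0 v) 1) (E1 ((app4 gK 7 6 3 0 v) 4) (E3 ((app4 gK 7 6 3 0 v) 0) (E2 ((app4 gK 7 6 3 0 v) 3) (E3 ((app4 gK 7 6 3 0 v) 6) (E2 ((app4 gK 7 6 3 0 v) 7) (E1 ((app4 gK 7 6 3 0 v) 8) x)))))))) := by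
  rw [k2323 (h 7) (h 6) (h 3) (h 0)]
  rfl

theorem rhs_s5 {v : Fin 9 → ℝ} (h : Pos v) (x : V6) :
    E2 (v 5) (E3 (v 2) (E2 (v 1) (E3 (v 0) (E1 (v 4) (E2 (v 3) (E3 (v 6) (E2 (v 7) (E1 (v 8) x)))))))) =
      E3 ((app4 gK 5 2 1 0 v) 0) (E2 ((app4 gK 5 2 1 0 v) 1) (E3 ((app4 gK 5 2 1 0 v) 2) (E2 ((app4 gK 5 2 1 0 v) 5) (E1 ((app4 gK 5 2 1 0 v) 4) (E2 ((app4 gK 5 2 1 0 v) 3) (E3 ((app4 gK 5 2 1 0 v) 6) (E2 ((app4 gK 5 2 1 0 v) 7) (E1 ((app4 gK 5 2 1 0 v) 8) x)))))))) := by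
  rw [k2323 (h 5) (h 2) (h 1) (h 0)]
  rfl

theorem rhs_s6 {v : Fin 9 → ℝ} (h : Pos v) (x : V6) :
    E3 (v 0) (E2 (v 1) (E3 (v 2) (E2 (v 5) (E1 (v 4) (E2 (v 3) (E3 (v 6) (E2 (v 7) (E1 (v 8) x)))))))) =
      E3 ((app3 gR 3 4 5 v) 0) (E2 ((app3 gR 3 4 5 v) 1) (E3 ((app3 gR 3 4 5 v) 2) (E1 ((app3 gR 3 4 5 v) 3) (E2 ((app3 gR 3 4 5 v) 4) (E1 ((app3 gR 3 4 5 v) 5) (E3 ((app3 gR 3 4 5 v) 6) (E2 ((app3 gR 3 4 5 v) 7) (E1 ((app3 gR 3 4 5 v) 8) x)))))))) := by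
  rw [r212 (h 3) (h 5)]
  rfl

theorem rhs {v : Fin 9 → ℝ} (h : Pos v) (x : V6) :
    W0 v x = W1 (app3 gR 3 4 5 (app4 gK 5 2 1 0 (app4 gK 7 6 3 0 (app3 gR 1 4 7 (app3 gR 1 3 8 (app4 gK 8 6 4 2 (app3 gR 5 7 8 v))))))) x := by
  have h1 := pos_R h 5 7 8
  have h2 := pos_K h1 8 6 4 2
  have h3 := pos_R h2 1 3 8
  have h4 := pos_R h3 1 4 7
  have h5 := pos_K h4 7 6 3 0
  have h6 := pos_K h5 5 2 1 0
  have h7 := pos_R h6 3 4 5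
  refine Eq.trans ?_ (Eq.trans (rhs_s0 h x) ?_)
  · rfl
  refine Eq.trans (show _ = _ from rfl) (Eq.trans (rhs_s1 h1 x) ?_)
  refine Eq.trans (show _ = _ from rfl) (Eq.trans (rhs_s2 h2 x) ?_)
  refine Eq.trans (show _ = _ from rfl) (Eq.trans (rhs_s3 h3 x) ?_)
  refine Eq.trans (show _ = _ from rfl) (Eq.trans (rhs_s4 h4 x) ?_)
  refine Eq.trans (show _ = _ from rfl) (Eq.trans (rhs_s5 h5 x) ?_)
  refine Eq.trans (show _ = _ from rfl) (Eq.trans (rhs_s6 h6 x) ?_)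
  rfl

theorem W1_inj {v w : Fin 9 → ℝ} (hv : Pos v) (hw : Pos w) (h : ∀ x, W1 v x = W1 w x) :
    v = w := by
  have c2 := h (0, 1, 0, 0, 0, 0)
  have c3 := h (0, 0, 1, 0, 0, 0)
  have c4 := h (0, 0, 0, 1, 0, 0)
  have c5 := h (0, 0, 0, 0, 1, 0)
  have c6 := h (0, 0, 0, 0, 0, 1)
  simp only [W1, E1, E2, E3, Prod.mk.injEq, mul_zero, mul_one, add_zero, zero_add,
    and_true, true_and] at c2 c3 c4 c5 c6
  have p1 := hw 1
  have p3 := hw 3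
  have p4 := hw 4
  have p6 := hw 6
  have e14 : v 3 * v 4 * v 6 = w 3 * w 4 * w 6 := by linarith [c4.1]
  have e15 : v 3 * v 4 * v 6 * v 7 = w 3 * w 4 * w 6 * w 7 := by linarith [c5.1]
  have e16 : v 3 * v 4 * v 6 * v 7 * v 8 = w 3 * w 4 * w 6 * w 7 * w 8 := by linarith [c6.1]
  have p7 := hw 7
  have e7 : v 7 = w 7 := by
    rw [e14] at e15
    exact mul_left_cancel₀ (by positivity) e15
  have e8 : v 8 = w 8 := by
    rw [e15] at e16
    exact mul_left_cancel₀ (by positivity) e16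
  simp only [e7, e8] at c2 c3 c4 c5
  have e12 : v 3 + v 5 = w 3 + w 5 := by linarith [c2]
  have e13 : v 3 * v 4 = w 3 * w 4 := by
    have := c3.1
    linear_combination this - w 7 * e12
  have e6 : v 6 = w 6 := by
    rw [e13] at e14
    exact mul_left_cancel₀ (by positivity) e14
  have e23 : v 4 + v 1 = w 4 + w 1 := by linarith [c3.2]
  have e24 : v 1 * v 2 = w 1 * w 2 := by
    have := c4.2.1
    rw [e6] at this
    linear_combination this - w 6 * e23
  have p2 := hw 2
  have e4 : v 4 = w 4 := by
    have := c5.2.1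
    rw [e6] at this
    have h2 : w 1 * w 2 * v 4 = w 1 * w 2 * w 4 := by
      linear_combination this - w 6 * w 7 * e23 - (v 4 + w 7) * e24
    exact mul_left_cancel₀ (by positivity) h2
  have e3 : v 3 = w 3 := by
    rw [e4] at e13
    exact mul_right_cancel₀ (by positivity) e13
  have e1 : v 1 = w 1 := by linarith
  have e2 : v 2 = w 2 := by
    rw [e1] at e24
    exact mul_left_cancel₀ (by positivity) e24
  have e5 : v 5 = w 5 := by linarith
  have e0 : v 0 = w 0 := by linarith [c4.2.2]
  funext i
  fin_cases i <;> assumption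

theorem geom {v : Fin 9 → ℝ} (h : Pos v) :
    app3 gR 5 7 8 (app4 gK 8 6 4 2 (app3 gR 1 3 8 (app3 gR 1 4 7 (app4 gK 7 6 3 0
      (app4 gK 5 2 1 0 (app3 gR 3 4 5 v)))))) =
    app3 gR 3 4 5 (app4 gK 5 2 1 0 (app4 gK 7 6 3 0 (app3 gR 1 4 7 (app3 gR 1 3 8
      (app4 gK 8 6 4 2 (app3 gR 5 7 8 v)))))) :=
  W1_inj (pos_R (pos_K (pos_R (pos_R (pos_K (pos_K (pos_R h _ _ _) _ _ _ _) _ _ _ _) _ _ _)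
      _ _ _) _ _ _ _) _ _ _)
    (pos_R (pos_K (pos_K (pos_R (pos_R (pos_K (pos_R h _ _ _) _ _ _ _) _ _ _) _ _ _)
      _ _ _ _) _ _ _ _) _ _ _)
    (fun x => (lhs h x).symm.trans (rhs h x))

/-- `f` decays like `2 ^ (- k n)`. -/
def Tr (f : ℕ → ℝ) (k : ℤ) : Prop :=
  ∃ c C : ℝ, 0 < c ∧ 0 < C ∧ ∀ n : ℕ,
    c * (2 : ℝ) ^ (-(k * n)) ≤ f n ∧ f n ≤ C * (2 : ℝ) ^ (-(k * n))

theorem Tr.congr {f : ℕ → ℝ} {k l : ℤ} (h : Tr f k) (e : k = l) : Tr f l := e ▸ h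

theorem Tr.mul {f g : ℕ → ℝ} {k l : ℤ} (hf : Tr f k) (hg : Tr g l) :
    Tr (fun n => f n * g n) (k + l) := by
  obtain ⟨c, C, hc, hC, h⟩ := hf
  obtain ⟨d, D, hd, hD, h'⟩ := hg
  refine ⟨c * d, C * D, by positivity, by positivity, fun n => ?_⟩
  have e : (2 : ℝ) ^ (-((k + l) * n)) = 2 ^ (-(k * n)) * 2 ^ (-(l * n)) := by
    rw [← zpow_add₀ (by norm_num)]; congr 1; ring
  have p1 : (0 : ℝ) < 2 ^ (-(k * n)) := by positivity
  have p2 : (0 : ℝ) < 2 ^ (-(l * n)) := by positivity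
  obtain ⟨a1, a2⟩ := h n
  obtain ⟨b1, b2⟩ := h' n
  rw [e]
  generalize (2 : ℝ) ^ (-(k * n)) = X at *
  generalize (2 : ℝ) ^ (-(l * n)) = Y at *
  have q1 : 0 < f n := lt_of_lt_of_le (by positivity) a1
  have q2 : 0 < g n := lt_of_lt_of_le (by positivity) b1
  constructor
  · calc c * d * (X * Y) = (c * X) * (d * Y) := by ring
      _ ≤ f n * g n := by gcongr
  · calc f n * g n ≤ (C * X) * (D * Y) := by gcongr
      _ = C * D * (X * Y) := by ring

theorem Tr.inv {f : ℕ → ℝ} {k : ℤ} (hf : Tr f k) : Tr (fun n => (f n)⁻¹) (-k) := by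
  obtain ⟨c, C, hc, hC, h⟩ := hf
  refine ⟨C⁻¹, c⁻¹, by positivity, by positivity, fun n => ?_⟩
  have e : (2 : ℝ) ^ (-(-k * n)) = (2 ^ (-(k * n)))⁻¹ := by
    rw [← zpow_neg]; congr 1; ring
  have p1 : (0 : ℝ) < 2 ^ (-(k * n)) := by positivity
  obtain ⟨a1, a2⟩ := h n
  rw [e, ← mul_inv, ← mul_inv]
  generalize (2 : ℝ) ^ (-(k * n)) = X at *
  have q1 : 0 < f n := lt_of_lt_of_le (by positivity) a1
  constructor
  · exact inv_anti₀ q1 a2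
  · exact inv_anti₀ (by positivity) a1

theorem Tr.div {f g : ℕ → ℝ} {k l : ℤ} (hf : Tr f k) (hg : Tr g l) :
    Tr (fun n => f n / g n) (k - l) := by
  simpa only [div_eq_mul_inv, sub_eq_add_neg] using hf.mul hg.inv

theorem Tr.add {f g : ℕ → ℝ} {k l : ℤ} (hf : Tr f k) (hg : Tr g l) :
    Tr (fun n => f n + g n) (min k l) := by
  obtain ⟨c, C, hc, hC, h⟩ := hf
  obtain ⟨d, D, hd, hD, h'⟩ := hg
  refine ⟨min c d, C + D, by positivity, by positivity, fun n => ?_⟩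
  have p1 : (0 : ℝ) < 2 ^ (-(k * n)) := by positivity
  have p2 : (0 : ℝ) < 2 ^ (-(l * n)) := by positivity
  have m : ∀ a b : ℤ, a ≤ b → (2 : ℝ) ^ (-(b * n)) ≤ 2 ^ (-(a * n)) := fun a b hab =>
    zpow_le_zpow_right₀ (by norm_num) (by nlinarith [Int.natCast_nonneg n])
  have m1 := m _ _ (min_le_left k l)
  have m2 := m _ _ (min_le_right k l)
  have mc := min_le_left c d
  have md := min_le_right c d
  have hcd : 0 < min c d := by positivity
  obtain ⟨a1, a2⟩ := h n
  obtain ⟨b1, b2⟩ := h' n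
  have q1 : 0 < f n := lt_of_lt_of_le (by positivity) a1
  have q2 : 0 < g n := lt_of_lt_of_le (by positivity) b1
  constructor
  · rcases le_total k l with hk | hk
    · rw [min_eq_left hk]
      have := mul_le_mul_of_nonneg_right mc p1.le
      linarith
    · rw [min_eq_right hk]
      have := mul_le_mul_of_nonneg_right md p2.le
      linarith
  · have := mul_le_mul_of_nonneg_left m1 hC.le
    have := mul_le_mul_of_nonneg_left m2 hD.le
    linarith

theorem Tr.le {f : ℕ → ℝ} {k l : ℤ} (hf : Tr f k) (hg : Tr f l) : k ≤ l := by
  obtain ⟨c, C, hc, hC, h⟩ := hf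
  obtain ⟨d, D, hd, hD, h'⟩ := hg
  by_contra hlt
  push Not at hlt
  obtain ⟨n, hn⟩ := pow_unbounded_of_one_lt (C / d) (one_lt_two : (1 : ℝ) < 2)
  have a := (h n).2
  have b := (h' n).1
  have m : (2 : ℝ) ^ n * 2 ^ (-(k * n)) ≤ 2 ^ (-(l * n)) := by
    rw [← zpow_natCast, ← zpow_add₀ (by norm_num)]
    exact zpow_le_zpow_right₀ (by norm_num) (by nlinarith [Int.natCast_nonneg n])
  have p1 : (0 : ℝ) < 2 ^ (-(k * n)) := by positivity
  rw [div_lt_iff₀ hd] at hn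
  have := mul_lt_mul_of_pos_right hn p1
  have := mul_le_mul_of_nonneg_left m hd.le
  nlinarith

def TT (F : ℕ → Fin 9 → ℝ) (v : Fin 9 → ℕ) : Prop := ∀ i, Tr (fun n => F n i) (v i)

theorem TT_R {F : ℕ → Fin 9 → ℝ} {v : Fin 9 → ℕ} (h : TT F v) (i j k : Fin 9) :
    TT (fun n => app3 gR i j k (F n)) (app3 combR i j k v) := by
  intro m
  have hi := h i
  have hj := h j
  have hk := h k
  simp only [app3, gR, combR]
  split_ifs
  · exact ((hi.mul hj).div (hi.add hk)).congr (by omega)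
  · exact (hi.add hk).congr (by omega)
  · exact ((hj.mul hk).div (hi.add hk)).congr (by omega)
  · exact h m

theorem TT_K {F : ℕ → Fin 9 → ℝ} {v : Fin 9 → ℕ} (h : TT F v) (i j k l : Fin 9) :
    TT (fun n => app4 gK i j k l (F n)) (app4 combK i j k l v) := by
  intro m
  have hi := h i
  have hj := h j
  have hk := h k
  have hl := h l
  have h1 := (hi.mul hj).add ((hi.add hk).mul hl)
  have h2 := ((hi.mul hi).mul hj).add (((hi.add hk).mul (hi.add hk)).mul hl)
  simp only [app4, gK, combK, q1, q2]
  split_ifs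
  · exact (((hi.mul hj).mul hk).div h1).congr (by omega)
  · exact ((h1.mul h1).div h2).congr (by omega)
  · exact (h2.div h1).congr (by omega)
  · exact ((((hj.mul hk).mul hk).mul hl).div h2).congr (by omega)
  · exact h m

/-- The 3D reflection equation of type B₃ on ℕ⁹ (positions written 1-based in the paper,
0-based here): `R₆₈₉ K₉₇₅₃ R₂₄₉ R₂₅₈ K₈₇₄₁ K₆₃₂₁ R₄₅₆ = R₄₅₆ K₆₃₂₁ K₈₇₄₁ R₂₅₈ R₂₄₉ K₉₇₅₃ R₆₈₉`,
where `K` is applied at the listed positions read and written in the listed, descending, order. -/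
theorem combRK_3d_reflection_B3 :
    app3 combR 5 7 8 ∘ app4 combK 8 6 4 2 ∘ app3 combR 1 3 8 ∘ app3 combR 1 4 7 ∘
        app4 combK 7 6 3 0 ∘ app4 combK 5 2 1 0 ∘ app3 combR 3 4 5 =
      app3 combR 3 4 5 ∘ app4 combK 5 2 1 0 ∘ app4 combK 7 6 3 0 ∘ app3 combR 1 4 7 ∘
        app3 combR 1 3 8 ∘ app4 combK 8 6 4 2 ∘
        (app3 combR 5 7 8 : (Fin 9 → ℕ) → Fin 9 → ℕ) := by
  funext v
  let F : ℕ → Fin 9 → ℝ := fun n i => (2 : ℝ) ^ (-((v i : ℤ) * n))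
  have hF : TT F v := fun i => ⟨1, 1, one_pos, one_pos, fun n => by simp [F]⟩
  have hp : ∀ n, Pos (F n) := fun n i => by simp only [F]; positivity
  have A := TT_R (TT_K (TT_R (TT_R (TT_K (TT_K (TT_R hF 3 4 5) 5 2 1 0) 7 6 3 0) 1 4 7)
    1 3 8) 8 6 4 2) 5 7 8
  have B := TT_R (TT_K (TT_K (TT_R (TT_R (TT_K (TT_R hF 5 7 8) 8 6 4 2) 1 3 8) 1 4 7)
    7 6 3 0) 5 2 1 0) 3 4 5
  have e := funext fun n => geom (hp n)
  rw [e] at A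
  funext i
  simp only [Function.comp_apply]
  have h1 := (A i).le (B i)
  have h2 := (B i).le (A i)
  exact_mod_cast le_antisymm h1 h2
end

section
/- Let V be a type and R : V³ → V³ any map. Then the following two identities of maps from V⁶ to V⁶ are equivalent: (i) P₍₃,₄₎ ∘ Φ₍₁,₂,₃₎ ∘ Φ₍₃,₄,₅₎ ∘ P₍₅,₆₎ ∘ P₍₂,₃₎ ∘ Φ₍₃,₄,₅₎ ∘ Φ₍₁,₂,₃₎ = Φ₍₄,₅,₆₎ ∘ Φ₍₂,₃,₄₎ ∘ P₍₁,₂₎ ∘ P₍₄,₅₎ ∘ Φ₍₂,₃,₄₎ ∘ Φ₍₄,₅,₆₎ ∘ P₍₃,₄₎; (ii) the tetrahedron equation R₍₁,₂,₄₎ ∘ R₍₁,₃,₅₎ ∘ R₍₂,₃,₆₎ ∘ R₍₄,₅,₆₎ = R₍₄,₅,₆₎ ∘ R₍₂,₃,₆₎ ∘ R₍₁,₃,₅₎ ∘ R₍₁,₂,₄₎. -/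
/-- `transp i j` exchanges the components at positions `i` and `j` of an `N`-fold product. -/
def transp {V : Type*} {N : ℕ} (i j : Fin N) (v : Fin N → V) : Fin N → V := fun m =>
  if m = i then v j else if m = j then v i else v m

/-- `phi R i j k = R₍i,j,k₎ ∘ P₍i,k₎`. -/
def phi {V : Type*} {N : ℕ} (R : V × V × V → V × V × V) (i j k : Fin N) :
    (Fin N → V) → Fin N → V :=
  app3 R i j k ∘ transp i k

theorem app3_perm {V : Type*} {N : ℕ} (f : V × V × V → V × V × V) (i j k : Fin N)
    (s : Equiv.Perm (Fin N)) (w : Fin N → V) :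
    app3 f i j k (w ∘ s) = app3 f (s i) (s j) (s k) w ∘ s := by
  funext m
  simp [app3]

theorem transp_perm {V : Type*} {N : ℕ} (i j : Fin N)
    (s : Equiv.Perm (Fin N)) (w : Fin N → V) :
    transp i j (w ∘ s) = w ∘ (s * Equiv.swap i j : Equiv.Perm (Fin N)) := by
  funext m
  simp only [transp, Function.comp, Equiv.Perm.mul_apply, Equiv.swap_apply_def]
  split_ifs <;> rfl

theorem comp_triv {V : Type*} (s : Equiv.Perm (Fin 6)) (hs : s = 1) (w : Fin 6 → V) :
    w ∘ s = w := by
  subst hs; rfl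

theorem lhs_eq {V : Type*} (R : V × V × V → V × V × V) (w : Fin 6 → V) :
    (transp 2 3 ∘ phi R 0 1 2 ∘ phi R 2 3 4 ∘ transp 4 5 ∘ transp 1 2 ∘ phi R 2 3 4 ∘
        (phi R 0 1 2 : (Fin 6 → V) → Fin 6 → V)) (w ∘ (Fin.revPerm : Equiv.Perm (Fin 6))) =
    (app3 R 0 1 3 ∘ app3 R 0 2 4 ∘ app3 R 1 2 5 ∘ app3 R 3 4 5) w := by
  simp only [phi, Function.comp_apply, transp_perm, app3_perm]
  rw [comp_triv _ (by decide)]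
  congr 1

theorem rhs_eq {V : Type*} (R : V × V × V → V × V × V) (w : Fin 6 → V) :
    (phi R 3 4 5 ∘ phi R 1 2 3 ∘ transp 0 1 ∘ transp 3 4 ∘ phi R 1 2 3 ∘ phi R 3 4 5 ∘
        transp 2 3) (w ∘ (Fin.revPerm : Equiv.Perm (Fin 6))) =
    (app3 R 3 4 5 ∘ app3 R 1 2 5 ∘ app3 R 0 2 4 ∘
        (app3 R 0 1 3 : (Fin 6 → V) → Fin 6 → V)) w := by
  simp only [phi, Function.comp_apply, transp_perm, app3_perm]
  rw [comp_triv _ (by decide)]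
  congr 1

/-- For any map `R : V³ → V³`, the identity
`P₃₄ Φ₁₂₃ Φ₃₄₅ P₅₆ P₂₃ Φ₃₄₅ Φ₁₂₃ = Φ₄₅₆ Φ₂₃₄ P₁₂ P₄₅ Φ₂₃₄ Φ₄₅₆ P₃₄` of maps on the 6-fold
product (positions written 1-based in the paper, 0-based here) is equivalent to the
tetrahedron equation `R₁₂₄ R₁₃₅ R₂₃₆ R₄₅₆ = R₄₅₆ R₂₃₆ R₁₃₅ R₁₂₄`. -/
theorem phi_identity_iff_tetrahedron {V : Type*} (R : V × V × V → V × V × V) :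
    (transp 2 3 ∘ phi R 0 1 2 ∘ phi R 2 3 4 ∘ transp 4 5 ∘ transp 1 2 ∘ phi R 2 3 4 ∘
        (phi R 0 1 2 : (Fin 6 → V) → Fin 6 → V) =
      phi R 3 4 5 ∘ phi R 1 2 3 ∘ transp 0 1 ∘ transp 3 4 ∘ phi R 1 2 3 ∘ phi R 3 4 5 ∘
        transp 2 3) ↔
    (app3 R 0 1 3 ∘ app3 R 0 2 4 ∘ app3 R 1 2 5 ∘ app3 R 3 4 5 =
      app3 R 3 4 5 ∘ app3 R 1 2 5 ∘ app3 R 0 2 4 ∘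
        (app3 R 0 1 3 : (Fin 6 → V) → Fin 6 → V)) := by
  constructor
  · intro h
    funext w
    rw [← lhs_eq, ← rhs_eq, h]
  · intro h
    funext v
    have hv : v = (v ∘ (Fin.revPerm : Equiv.Perm (Fin 6))) ∘
        (Fin.revPerm : Equiv.Perm (Fin 6)) := by
      funext m
      simp
    rw [hv, lhs_eq, rhs_eq, h]
end

section
/- The combinatorial maps solve the F₄ analogue of the tetrahedron equation on ℕ²⁴: with S = R the combinatorial R-map and K the combinatorial K-map, the 50-factor identity of maps from ℕ²⁴ to ℕ²⁴ holds: R₍₁₄,₁₅,₁₆₎ R₍₉,₁₁,₁₆₎ K₍₇,₈,₁₀,₁₆₎ K₍₁₇,₁₅,₁₃,₉₎ R₍₄,₅,₁₆₎ S₍₇,₁₂,₁₇₎ R₍₁,₂,₁₆₎ S₍₆,₁₀,₁₇₎ R₍₉,₁₄,₁₈₎ K₍₁₇,₅,₃,₁₎ R₍₁₁,₁₅,₁₈₎ K₍₆,₈,₁₂,₁₈₎ R₍₁,₄,₁₈₎ R₍₁,₈,₁₅₎ S₍₇,₁₃,₁₉₎ K₍₁₉,₁₁,₆,₁₎ K₍₁₉,₁₅,₁₂,₄₎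 S₍₃,₁₀,₁₉₎ R₍₄,₈,₁₁₎ K₍₂₀,₁₄,₇,₁₎ R₍₂,₅,₁₈₎ S₍₆,₁₃,₂₀₎ S₍₃,₁₂,₂₀₎ R₍₁,₉,₂₁₎ K₍₂₀,₁₅,₁₀,₂₎ R₍₄,₁₄,₂₁₎ K₍₃,₈,₁₃,₂₁₎ R₍₂,₁₁,₂₁₎ R₍₂,₈,₁₄₎ S₍₆,₇,₂₂₎ K₍₂₂,₄,₃,₂₎ R₍₅,₁₅,₂₁₎ K₍₂₂,₁₄,₁₃,₁₁₎ S₍₁₀,₁₂,₂₂₎ K₍₂₃,₉,₆,₂₎ S₍₃,₇,₂₃₎ S₍₁₉,₂₀,₂₂₎ K₍₂₂,₁₈,₁₇,₁₆₎ S₍₁₀,₁₃,₂₃₎ K₍₂₃,₁₄,₁₂,₅₎ S₍₃,₆,₂₄₎ K₍₂₃,₂₁,₁₉,₁₆₎ K₍₂₄,₉,₇,₄₎ S₍₁₇,₂₀,₂₃₎ K₍₂₄,₁₁,₁₀,₅₎ S₍₁₂,₁₃,₂₄₎ S₍₁₇,₁₉,₂₄₎ K₍₂₄,₂₁,₂₀,₁₈₎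 R₍₅,₈,₉₎ S₍₂₂,₂₃,₂₄₎ = the product of the same 50 operators in the reverse order (each operator keeping its internal index order). -/
set_option linter.unusedSimpArgs false

namespace F4Tet

abbrev Word := List (List ℕ)

/-- An operator is encoded by its index list: three indices mean `R`, four mean `K`. -/
def act : List ℕ → (ℕ → ℕ) → ℕ → ℕ
  | [i, j, k], s => fun m =>
      if m = i then (combR (s i, s j, s k)).1
      else if m = j then (combR (s i, s j, s k)).2.1
      else if m = k then (combR (s i, s j, s k)).2.2
      else s m
  | [i, j, k, l], s => fun m =>
      if m = i then (combK (s i, s j, s k, s l)).1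
      else if m = j then (combK (s i, s j, s k, s l)).2.1
      else if m = k then (combK (s i, s j, s k, s l)).2.2.1
      else if m = l then (combK (s i, s j, s k, s l)).2.2.2
      else s m
  | _, s => s

/-- Shapes of operators. -/
theorem act_cases {p : List ℕ → Prop} (h3 : ∀ i j k, p [i, j, k])
    (h4 : ∀ i j k l, p [i, j, k, l]) (h : ∀ o, (∀ s, act o s = s) → p o) : ∀ o, p o
  | [] => h _ fun _ => rfl
  | [_] => h _ fun _ => rfl
  | [_, _] => h _ fun _ => rfl
  | [_, _, _] => h3 _ _ _
  | [_, _, _, _] => h4 _ _ _ _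
  | _ :: _ :: _ :: _ :: _ :: _ => h _ fun _ => rfl

theorem act_not_mem (o : List ℕ) : ∀ (s : ℕ → ℕ) (m : ℕ), m ∉ o → act o s m = s m := by
  induction o using act_cases with
  | h3 i j k => intro s m hm; simp at hm; simp [act, hm]
  | h4 i j k l => intro s m hm; simp at hm; simp [act, hm]
  | h o ho => intro s m _; rw [ho]

/-- Relabelling by a map that is injective on the relevant indices. -/
theorem act_map (S : Set ℕ) (e : ℕ → ℕ) (he : Set.InjOn e S) (o : List ℕ) :
    (∀ i ∈ o, i ∈ S) → ∀ (t u : ℕ → ℕ), (∀ n ∈ S, t (e n) = u n) →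
      ∀ n ∈ S, act (o.map e) t (e n) = act o u n := by
  have key : ∀ n ∈ S, ∀ i ∈ S, (e n = e i ↔ n = i) := fun n hn i hi =>
    ⟨fun h => he hn hi h, fun h => by rw [h]⟩
  cases o using act_cases with
  | h3 i j k =>
    intro ho t u htu n hn
    simp at ho
    obtain ⟨hi, hj, hk⟩ := ho
    simp [act, key n hn i hi, key n hn j hj, key n hn k hk, htu i hi, htu j hj, htu k hk, htu n hn]
  | h4 i j k l =>
    intro ho t u htu n hn
    simp at ho
    obtain ⟨hi, hj, hk, hl⟩ := ho
    simp [act, key n hn i hi, key n hn j hj, key n hn k hk, key n hn l hl,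
      htu i hi, htu j hj, htu k hk, htu l hl, htu n hn]
  | h o ho =>
    intro _ t u htu n hn
    match o with
    | [] => exact htu n hn
    | [_] => exact htu n hn
    | [_, _] => exact htu n hn
    | [i, j, k] => simp_all [act]
    | [i, j, k, l] => simp_all [act]
    | _ :: _ :: _ :: _ :: _ :: _ => exact htu n hn

theorem act_congr (o : List ℕ) (s t : ℕ → ℕ) (h : ∀ i ∈ o, s i = t i) :
    ∀ m ∈ o, act o s m = act o t m := by
  intro m hm
  have := act_map {i | i ∈ o} id (fun _ _ _ _ h => h) o (fun _ h => h) s t h m hm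
  simpa using this

theorem act_comm (o o' : List ℕ) (h : ∀ i ∈ o, i ∉ o') (s : ℕ → ℕ) :
    act o (act o' s) = act o' (act o s) := by
  funext m
  by_cases hm : m ∈ o
  · rw [act_not_mem o' _ m (h m hm)]
    exact act_congr o _ _ (fun i hi => act_not_mem o' _ i (h i hi)) m hm
  · rw [act_not_mem o _ m hm]
    by_cases hm' : m ∈ o'
    · exact (act_congr o' _ _ (fun i hi => act_not_mem o _ i (fun h' => h i h' hi)) m hm').symm
    · rw [act_not_mem o' _ m hm', act_not_mem o' _ m hm', act_not_mem o _ m hm]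

theorem combR_invol (a b c : ℕ) : combR (combR (a, b, c)) = (a, b, c) := by
  simp only [combR, Prod.mk.injEq]
  omega

theorem combK_invol (a b c d : ℕ) : combK (combK (a, b, c, d)) = (a, b, c, d) := by
  have key : ∃ a' b' c' d' : ℕ, combK (a, b, c, d) = (a', b', c', d') ∧
      ((d ≤ b ∧ c ≤ a ∧ a' + d = a + b ∧ b' = d ∧ c' = c ∧ d' = b) ∨
       (d ≤ b ∧ a ≤ c ∧ a' + d = b + c ∧ b' = d ∧ c' = a ∧ d' + 2 * a = b + 2 * c) ∨
       (b ≤ d ∧ c + d ≤ a + b ∧ a' + d = a + b ∧ b' = d ∧ c' = c ∧ d' = b) ∨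
       (b ≤ d ∧ a + b ≤ c + d ∧ 2 * c + d ≤ 2 * a + b ∧ a' = c ∧ b' + 2 * c + d = 2 * a + 2 * b ∧
          c' + a + b = 2 * c + d ∧ d' = b) ∨
       (b ≤ d ∧ a + b ≤ c + d ∧ 2 * a + b ≤ 2 * c + d ∧ a' = c ∧ b' = b ∧ c' = a ∧
          d' + 2 * a = 2 * c + d)) := by
    refine ⟨_, _, _, _, rfl, ?_⟩
    simp only
    rcases le_total d b with h1 | h1
    · rcases le_total c a with h2 | h2
      · left; omega
      · right; left; omega
    · rcases le_total (c + d) (a + b) with h2 | h2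
      · right; right; left; omega
      · rcases le_total (2 * c + d) (2 * a + b) with h3 | h3
        · right; right; right; left; omega
        · right; right; right; right; omega
  obtain ⟨a', b', c', d', h, hc⟩ := key
  rw [h]
  simp only [combK, Prod.mk.injEq]
  rcases hc with hc | hc | hc | hc | hc <;> refine ⟨?_, ?_, ?_, ?_⟩ <;> omega

theorem act_invol (o : List ℕ) : o.Nodup → ∀ s, act o (act o s) = s := by
  cases o using act_cases with
  | h3 i j k =>
    intro hn s
    simp at hn
    obtain ⟨⟨h1, h2⟩, h3⟩ := hn
    have := combR_invol (s i) (s j) (s k)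
    funext m
    simp only [act]
    simp [Ne.symm h1, Ne.symm h2, Ne.symm h3, this]
    grind
  | h4 i j k l =>
    intro hn s
    simp at hn
    obtain ⟨⟨h1, h2, h3⟩, ⟨h4, h5⟩, h6⟩ := hn
    have := combK_invol (s i) (s j) (s k) (s l)
    funext m
    simp only [act]
    simp [Ne.symm h1, Ne.symm h2, Ne.symm h3, Ne.symm h4, Ne.symm h5, Ne.symm h6, this]
    grind
  | h o ho => intro _ s; rw [ho, ho]

/-- Composition of a word, rightmost operator first. -/
def run : Word → (ℕ → ℕ) → ℕ → ℕ
  | [], s => s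
  | o :: w, s => act o (run w s)

theorem run_append (v w : Word) (s : ℕ → ℕ) : run (v ++ w) s = run v (run w s) := by
  induction v with
  | nil => rfl
  | cons o v ih => simp [run, ih]

theorem run_map (S : Set ℕ) (e : ℕ → ℕ) (he : Set.InjOn e S) (t u : ℕ → ℕ)
    (htu : ∀ n ∈ S, t (e n) = u n) (w : Word) (hw : ∀ o ∈ w, ∀ i ∈ o, i ∈ S) :
    (∀ n ∈ S, run (w.map (List.map e)) t (e n) = run w u n) := by
  induction w with
  | nil => exact htu
  | cons o w ih =>
    exact act_map S e he o (hw o (by simp)) _ _ (ih fun o' ho' => hw o' (by simp [ho']))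

theorem run_outside (S : Set ℕ) (t : ℕ → ℕ) (w : Word) (hw : ∀ o ∈ w, ∀ i ∈ o, i ∈ S)
    (n : ℕ) (hn : n ∉ S) : run w t n = t n := by
  induction w with
  | nil => rfl
  | cons o w ih =>
    simp only [run]
    rw [act_not_mem o _ n (fun h => hn (hw o (by simp) n h))]
    exact ih fun o' ho' => hw o' (by simp [ho'])

/-- A word that equals its reverse, as a map. -/
def Good (P : Word) : Prop := (∀ o ∈ P, o.Nodup) ∧ ∀ s, run P s = run P.reverse s

theorem Good.rev {P : Word} (h : Good P) : Good P.reverse :=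
  ⟨fun o ho => h.1 o (by simpa using ho), fun s => by rw [List.reverse_reverse]; exact (h.2 s).symm⟩

theorem Good.rot1 {x : List ℕ} {w : Word} (h : Good (x :: w)) : Good (w ++ [x]) := by
  refine ⟨fun o ho => h.1 o (by simpa [or_comm] using ho), fun s => ?_⟩
  have hx := act_invol x (h.1 x (by simp))
  have h2 := h.2 (act x s)
  simp only [run, List.reverse_cons, run_append, hx] at h2
  simp only [run, List.reverse_append, run_append, List.reverse_cons, List.reverse_nil,
    List.nil_append, ← h2, hx]

theorem Good.rot {P : Word} (h : Good P) (k : ℕ) : Good (P.rotate k) := by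
  induction k with
  | zero => simpa using h
  | succ k ih =>
    rw [← List.rotate_rotate]
    cases hP : P.rotate k with
    | nil => rw [hP] at ih; simpa using ih
    | cons x w => rw [hP] at ih; simpa using ih.rot1

theorem Good.map {P : Word} (h : Good P) (N : ℕ) (e : ℕ → ℕ) (he : Set.InjOn e {n | n < N})
    (hP : ∀ o ∈ P, ∀ i ∈ o, i < N) : Good (P.map (List.map e)) := by
  constructor
  · intro o ho
    obtain ⟨o', ho', rfl⟩ := List.mem_map.1 ho
    exact List.Nodup.map_on (fun a ha b hb hab => he (hP o' ho' a ha) (hP o' ho' b hb) hab)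
      (h.1 o' ho')
  · intro s
    funext m
    rw [← List.map_reverse]
    have hP' : ∀ o ∈ P.reverse, ∀ i ∈ o, i ∈ {n | n < N} :=
      fun o ho => hP o (by simpa using ho)
    by_cases hm : m ∈ e '' {n | n < N}
    · obtain ⟨n, hn, rfl⟩ := hm
      rw [run_map _ e he s (s ∘ e) (fun _ _ => rfl) P hP n hn,
        run_map _ e he s (s ∘ e) (fun _ _ => rfl) P.reverse hP' n hn, h.2]
    · rw [run_outside (e '' {n | n < N}) s _ _ m hm, run_outside (e '' {n | n < N}) s _ _ m hm]
      · intro o ho i hi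
        obtain ⟨o', ho', rfl⟩ := List.mem_map.1 ho
        obtain ⟨j, hj, rfl⟩ := List.mem_map.1 hi
        exact ⟨j, hP' o' ho' j hj, rfl⟩
      · intro o ho i hi
        obtain ⟨o', ho', rfl⟩ := List.mem_map.1 ho
        obtain ⟨j, hj, rfl⟩ := List.mem_map.1 hi
        exact ⟨j, hP o' ho' j hj, rfl⟩

/-- `R` is symmetric, so its index triple may be reversed. -/
def norm : List ℕ → List ℕ
  | [i, j, k] => if k < i then [k, j, i] else [i, j, k]
  | o => o

theorem act_norm (o : List ℕ) (ho : o.Nodup) (s : ℕ → ℕ) : act (norm o) s = act o s := by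
  unfold norm
  split
  · split_ifs
    · funext m
      simp [act, combR] at ho ⊢
      have hmin : ∀ x y : ℕ, min x y = min y x := min_comm
      grind
    · rfl
  · rfl

theorem norm_nodup (o : List ℕ) (ho : o.Nodup) : (norm o).Nodup := by
  unfold norm
  split
  · split_ifs
    · simp at ho ⊢; grind
    · exact ho
  · exact ho

theorem run_norm (w : Word) (hw : ∀ o ∈ w, o.Nodup) (s : ℕ → ℕ) :
    run (w.map norm) s = run w s := by
  induction w with
  | nil => rfl
  | cons o w ih =>
    simp only [List.map_cons, run]
    rw [ih fun o' ho' => hw o' (by simp [ho']), act_norm o (hw o (by simp))]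

theorem Good.norm {P : Word} (h : Good P) : Good (P.map norm) := by
  constructor
  · intro o ho
    obtain ⟨o', ho', rfl⟩ := List.mem_map.1 ho
    exact norm_nodup _ (h.1 o' ho')
  · intro s
    rw [← List.map_reverse, run_norm _ h.1, run_norm _ h.rev.1, h.2]

/-! Rewriting of words -/

def disj (o q : List ℕ) : Bool := o.all fun i => !(q.contains i)

theorem disj_spec {o q : List ℕ} (h : disj o q = true) : ∀ i ∈ o, i ∉ q := by
  simpa [disj] using h

def pull (o : List ℕ) : Word → Option Word
  | [] => none
  | q :: v => if q == o then some v else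
      if disj q o then (pull o v).map (fun x => q :: x) else none

theorem pull_spec (o : List ℕ) (v v' : Word) (h : pull o v = some v') (s : ℕ → ℕ) :
    run v s = act o (run v' s) := by
  induction v generalizing v' with
  | nil => simp [pull] at h
  | cons q v ih =>
    simp only [pull] at h
    split_ifs at h with h1 h2
    · simp at h1 h; subst h1; subst h; rfl
    · obtain ⟨x, hx, rfl⟩ := Option.map_eq_some_iff.1 h
      simp only [run]
      rw [ih x hx, act_comm q o (disj_spec h2)]

def traceEq : Word → Word → Bool
  | [], v => v.isEmpty
  | o :: w, v => match pull o v with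
    | some v' => traceEq w v'
    | none => false

theorem traceEq_spec (w v : Word) (h : traceEq w v = true) (s : ℕ → ℕ) : run w s = run v s := by
  induction w generalizing v with
  | nil => simp [traceEq] at h; subst h; rfl
  | cons o w ih =>
    simp only [traceEq] at h
    split at h
    · rename_i v' hv'
      rw [pull_spec o v v' hv', ← ih v' h]; rfl
    · cases h

/-- Candidate splitting of a word around the block `M`. -/
def splitW (M : Word) : Word → Word → Word → Word → Word × Word
  | [], pre, post, _ => (pre.reverse, post.reverse)
  | o :: w, pre, post, seen =>
    if M.contains o then splitW M w pre post (o :: seen)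
    else if seen.all (disj o) && post.all (disj o) then splitW M w (o :: pre) post seen
    else splitW M w pre (o :: post) seen

def block (P : Word) (k : ℕ) (e : List ℕ) : Word :=
  ((P.rotate k).map (List.map fun n => e.getD n 0)).map norm

def step (P : Word) (k : ℕ) (e : List ℕ) (w : Word) : Option Word :=
  let M := block P k e
  let pp := splitW M w [] [] []
  if decide e.Nodup && (P.all fun o => o.all fun i => decide (i < e.length)) &&
      traceEq w (pp.1 ++ (M ++ pp.2)) then
    some (pp.1 ++ (M.reverse ++ pp.2)) else none

theorem block_good {P : Word} (h : Good P) (k : ℕ) (e : List ℕ) (he : e.Nodup)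
    (hP : ∀ o ∈ P, ∀ i ∈ o, i < e.length) : Good (block P k e) := by
  refine ((h.rot k).map e.length _ ?_ ?_).norm
  · intro a ha b hb hab
    simp only [Set.mem_ofPred_eq] at ha hb
    simp only [List.getD_eq_getElem _ _ ha, List.getD_eq_getElem _ _ hb] at hab
    exact (List.Nodup.getElem_inj_iff he).1 hab
  · intro o ho
    exact hP o (by simpa using ho)

theorem step_spec {P : Word} (h : Good P) (k : ℕ) (e : List ℕ) (w w' : Word)
    (hs : step P k e w = some w') (s : ℕ → ℕ) : run w s = run w' s := by
  simp only [step] at hs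
  split_ifs at hs with hc
  simp only [Bool.and_eq_true, decide_eq_true_eq, List.all_eq_true] at hc
  obtain ⟨⟨h1, h2⟩, h3⟩ := hc
  have hg := block_good h k e h1 h2
  rw [traceEq_spec _ _ h3 s]
  simp only [Option.some.injEq] at hs
  rw [← hs]
  simp only [run_append, hg.2]

def check (pat : ℕ → Word) (target : Word) : List (ℕ × ℕ × List ℕ) → Word → Bool
  | [], w => traceEq w target
  | c :: cs, w => match step (pat c.1) c.2.1 c.2.2 w with
    | some w' => check pat target cs w'
    | none => false

theorem check_spec (pat : ℕ → Word) (hp : ∀ b, Good (pat b)) (target : Word)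
    (cs : List (ℕ × ℕ × List ℕ)) (w : Word) (h : check pat target cs w = true) (s : ℕ → ℕ) :
    run w s = run target s := by
  induction cs generalizing w with
  | nil => exact traceEq_spec _ _ h s
  | cons c cs ih =>
    simp only [check] at h
    split at h
    · rename_i w' hw'
      rw [step_spec (hp _) _ _ _ _ hw', ih w' h]
    · cases h

/-! The tetrahedron equation -/

def tet : Word := [[0, 1, 3], [0, 2, 4], [1, 2, 5], [3, 4, 5]]

theorem tet_good : Good tet := by
  refine ⟨by decide, fun s => ?_⟩
  funext m
  by_cases hm : m < 6
  · simp only [tet, run, List.reverse_cons, List.reverse_nil, List.nil_append, List.cons_append,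
      act, combR]
    generalize s 0 = a, s 1 = b, s 2 = c, s 3 = d, s 4 = e, s 5 = f
    interval_cases m <;> simp <;> omega
  · rw [run_outside {n | n < 6} s _ (by decide) m hm, run_outside {n | n < 6} s _ (by decide) m hm]

/-! Folding -/

def Rep (D : ℕ → Bool) (s t : ℕ → ℕ) : Prop :=
  ∀ n, t (2 * n) = s n ∧ (D n = true → t (2 * n + 1) = s n)

def liftOp (D : ℕ → Bool) : List ℕ × Bool → Word
  | ([i, j, k], y) =>
    if D i then
      if y then [[2 * i + 1, 2 * j, 2 * k], [2 * i, 2 * j + 1, 2 * k + 1]]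
      else [[2 * i, 2 * j, 2 * k], [2 * i + 1, 2 * j + 1, 2 * k + 1]]
    else [[2 * i, 2 * j, 2 * k]]
  | ([a, b, c, d], _) =>
    [[2 * a, 2 * b, 2 * c + 1], [2 * a, 2 * c, 2 * d],
      [2 * a + 1, 2 * c + 1, 2 * d], [2 * a + 1, 2 * b, 2 * c]]
  | _ => []

def okOp (D : ℕ → Bool) : List ℕ → Bool
  | [i, j, k] => decide [i, j, k].Nodup && (D i == D j) && (D i == D k)
  | [a, b, c, d] => decide [a, b, c, d].Nodup && D a && !(D b) && D c && !(D d)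
  | _ => false

def liftW (D : ℕ → Bool) : List (List ℕ × Bool) → Word
  | [] => []
  | o :: w => liftOp D o ++ liftW D w

theorem combK_fold (a b c d : ℕ) :
    let r1 := combR (a, b, c)
    let r2 := combR (r1.1, c, d)
    let r3 := combR (a, r1.2.2, r2.2.2)
    let r4 := combR (r3.1, r1.2.1, r2.2.1)
    combK (a, b, c, d) = (r2.1, r4.2.1, r3.2.1, r3.2.2) ∧ r4.1 = r2.1 ∧ r4.2.2 = r3.2.1 := by
  simp only [combK, combR, Prod.mk.injEq]
  omega

theorem act3_eval {i j k : ℕ} (h1 : i ≠ j) (h2 : i ≠ k) (h3 : j ≠ k) (s : ℕ → ℕ) :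
    act [i, j, k] s i = (combR (s i, s j, s k)).1 ∧
    act [i, j, k] s j = (combR (s i, s j, s k)).2.1 ∧
    act [i, j, k] s k = (combR (s i, s j, s k)).2.2 := by
  simp [act, h1.symm, h2.symm, h3.symm]

theorem lift_spec (D : ℕ → Bool) (o : List ℕ) (y : Bool) (ho : okOp D o = true) (s t : ℕ → ℕ)
    (h : Rep D s t) : Rep D (act o s) (run (liftOp D (o, y)) t) := by
  have odd1 : ∀ x y : ℕ, ¬ (2 * x + 1 = 2 * y) := by omega
  have odd2 : ∀ x y : ℕ, ¬ (2 * x = 2 * y + 1) := by omega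
  match o with
  | [] => simp [okOp] at ho
  | [_] => simp [okOp] at ho
  | [_, _] => simp [okOp] at ho
  | [i, j, k] =>
    simp [okOp] at ho
    obtain ⟨⟨⟨⟨h1, h2⟩, h3⟩, hj⟩, hk⟩ := ho
    have hi0 := (h i).1
    have hj0 := (h j).1
    have hk0 := (h k).1
    intro n
    cases hD : D i with
    | false =>
      have hn : D n = true → n ≠ i ∧ n ≠ j ∧ n ≠ k := by
        refine fun hn => ⟨?_, ?_, ?_⟩ <;> rintro rfl <;> simp_all
      refine ⟨?_, fun hDn => ?_⟩
      · simp [liftOp, hD, run, act, hi0, hj0, hk0, (h n).1]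
      · simp [liftOp, hD, run, act, hn hDn, odd1, (h n).2 hDn]
    | true =>
      rw [hD] at hj hk
      have hi1 := (h i).2 hD
      have hj1 := (h j).2 hj.symm
      have hk1 := (h k).2 hk.symm
      refine ⟨?_, fun hDn => ?_⟩
      · cases y <;>
        simp [liftOp, hD, run, act, odd1, odd2, hi0, hj0, hk0, hi1, hj1, hk1, (h n).1,
          h1, h2, h3, Ne.symm h1, Ne.symm h2, Ne.symm h3] <;> grind
      · cases y <;>
        simp [liftOp, hD, run, act, odd1, odd2, hi0, hj0, hk0, hi1, hj1, hk1, (h n).2 hDn,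
          h1, h2, h3, Ne.symm h1, Ne.symm h2, Ne.symm h3] <;> grind
  | [a, b, c, d] =>
    simp [okOp] at ho
    obtain ⟨⟨⟨⟨⟨⟨h1, h2, h3⟩, ⟨h4, h5⟩, h6⟩, ha⟩, hb⟩, hc⟩, hd⟩ := ho
    have ha0 := (h a).1
    have hb0 := (h b).1
    have hc0 := (h c).1
    have hd0 := (h d).1
    have ha1 := (h a).2 ha
    have hc1 := (h c).2 hc
    obtain ⟨e1, e2, e3⟩ := combK_fold (s a) (s b) (s c) (s d)
    intro n
    refine ⟨?_, fun hDn => ?_⟩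
    · simp [liftOp, run, act, odd1, odd2, ha0, hb0, hc0, hd0, ha1, hc1, (h n).1,
        h1, h2, h3, h4, h5, h6, Ne.symm h1, Ne.symm h2, Ne.symm h3, Ne.symm h4, Ne.symm h5,
        Ne.symm h6, e1, e2, e3]
      grind
    · have hnb : n ≠ b := by rintro rfl; simp_all
      have hnd : n ≠ d := by rintro rfl; simp_all
      simp [liftOp, run, act, odd1, odd2, ha0, hb0, hc0, hd0, ha1, hc1, (h n).2 hDn,
        h1, h2, h3, h4, h5, h6, Ne.symm h1, Ne.symm h2, Ne.symm h3, Ne.symm h4, Ne.symm h5,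
        Ne.symm h6, e1, e2, e3, hnb, hnd]
      grind
  | _ :: _ :: _ :: _ :: _ :: _ => simp [okOp] at ho

theorem liftW_spec (D : ℕ → Bool) (w : List (List ℕ × Bool)) (hw : ∀ o ∈ w, okOp D o.1 = true)
    (s t : ℕ → ℕ) (h : Rep D s t) :
    Rep D (run (w.map Prod.fst) s) (run (liftW D w) t) := by
  induction w with
  | nil => exact h
  | cons o w ih =>
    simp only [liftW, run_append, List.map_cons, run]
    exact lift_spec D o.1 o.2 (hw o (by simp)) _ _ (ih fun o' ho' => hw o' (by simp [ho']))

theorem nodup_of_ok (D : ℕ → Bool) (o : List ℕ) (ho : okOp D o = true) : o.Nodup := by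
  unfold okOp at ho
  split at ho
  · simp only [Bool.and_eq_true, decide_eq_true_eq] at ho
    exact ho.1.1
  · simp only [Bool.and_eq_true, decide_eq_true_eq] at ho
    exact ho.1.1.1.1
  · cases ho

theorem fold_good (D : ℕ → Bool) (w : List (List ℕ × Bool)) (cs : List (ℕ × ℕ × List ℕ))
    (hw : (w.all fun o => okOp D o.1) = true)
    (h : check (fun _ => tet) ((liftW D w.reverse).map norm) cs ((liftW D w).map norm) = true)
    (hn : ((liftW D w).all fun o => decide o.Nodup) = true)
    (hn' : ((liftW D w.reverse).all fun o => decide o.Nodup) = true) :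
    Good (w.map Prod.fst) := by
  simp only [List.all_eq_true, decide_eq_true_eq] at hw hn hn'
  refine ⟨fun o ho => ?_, fun s => ?_⟩
  · obtain ⟨x, hx, rfl⟩ := List.mem_map.1 ho
    exact nodup_of_ok D _ (hw x hx)
  · have hr : Rep D s (fun n => s (n / 2)) := by
      intro n
      constructor
      · show s (2 * n / 2) = s n
        congr 1; omega
      · intro _
        show s ((2 * n + 1) / 2) = s n
        congr 1; omega
    have h1 := liftW_spec D w hw s _ hr
    have h2 := liftW_spec D w.reverse (fun o ho => hw o (by simpa using ho)) s _ hr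
    have h3 := check_spec _ (fun _ => tet_good) _ cs _ h (fun n => s (n / 2))
    rw [run_norm _ hn, run_norm _ hn'] at h3
    funext n
    rw [← (h1 n).1, h3, (h2 n).1, List.map_reverse]

/-- The first rank three identity, folded from `D₄`. -/
def patX : Word := [[0, 1, 2], [3, 4, 2], [5, 1, 6, 3], [3, 0, 7], [4, 1, 7], [8, 0, 6, 4], [8, 7, 5, 2]]

/-- The second rank three identity, folded from `A₅`. -/
def patY : Word := [[0, 1, 2], [2, 3, 4, 5], [6, 7, 0, 5], [4, 1, 6], [4, 0, 8], [8, 7, 1, 3], [2, 6, 8]]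

theorem patX_good : Good patX :=
  fold_good (fun n => [5, 6, 8].contains n)
    (patX.zip [false, false, false, false, false, false, false])
   [(0, 1, [11, 14, 2, 16, 12, 8]), (0, 0, [6, 13, 0, 11, 14, 16]),
    (0, 0, [6, 8, 12, 4, 10, 16]), (0, 1, [4, 10, 2, 16, 0, 13]), (0, 2, [14, 0, 2, 6, 8, 4]),
    (0, 1, [4, 11, 2, 17, 0, 12]), (0, 0, [6, 8, 13, 4, 11, 17]), (0, 0, [6, 12, 0, 10, 14, 17]),
    (0, 1, [10, 14, 2, 17, 13, 8])]
    (by decide +kernel) (by decide +kernel) (by decide +kernel) (by decide +kernel)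

theorem patY_good : Good patY :=
  fold_good (fun n => [0, 1, 2, 4, 6, 8].contains n)
    (patY.zip [false, false, false, false, true, false, true])
   [(0, 0, [8, 6, 2, 5, 12, 16]), (0, 2, [16, 0, 14, 9, 3, 13]), (0, 0, [10, 9, 0, 5, 12, 16]),
    (0, 2, [16, 0, 2, 9, 6, 4]), (0, 2, [12, 0, 2, 10, 8, 4]), (0, 0, [0, 2, 14, 4, 13, 17]),
    (0, 0, [1, 3, 14, 5, 12, 16]), (0, 2, [13, 1, 3, 10, 9, 5]), (0, 2, [17, 1, 3, 8, 6, 5]),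
    (0, 0, [10, 8, 1, 4, 13, 17]), (0, 0, [9, 6, 3, 4, 13, 17]), (0, 2, [17, 1, 14, 8, 2, 12])]
    (by decide +kernel) (by decide +kernel) (by decide +kernel) (by decide +kernel)

def pat : ℕ → Word
  | 0 => patX
  | 1 => patX.reverse
  | 2 => patY
  | _ => patY.reverse

theorem pat_good : ∀ b, Good (pat b)
  | 0 => patX_good
  | 1 => patX_good.rev
  | 2 => patY_good
  | _ + 3 => patY_good.rev

def wordF : List (List (Fin 24)) :=
   [[13, 14, 15], [8, 10, 15], [6, 7, 9, 15], [16, 14, 12, 8], [3, 4, 15], [6, 11, 16],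
    [0, 1, 15], [5, 9, 16], [8, 13, 17], [16, 4, 2, 0], [10, 14, 17], [5, 7, 11, 17], [0, 3, 17],
    [0, 7, 14], [6, 12, 18], [18, 10, 5, 0], [18, 14, 11, 3], [2, 9, 18], [3, 7, 10],
    [19, 13, 6, 0], [1, 4, 17], [5, 12, 19], [2, 11, 19], [0, 8, 20], [19, 14, 9, 1],
    [3, 13, 20], [2, 7, 12, 20], [1, 10, 20], [1, 7, 13], [5, 6, 21], [21, 3, 2, 1], [4, 14, 20],
    [21, 13, 12, 10], [9, 11, 21], [22, 8, 5, 1], [2, 6, 22], [18, 19, 21], [21, 17, 16, 15],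
    [9, 12, 22], [22, 13, 11, 4], [2, 5, 23], [22, 20, 18, 15], [23, 8, 6, 3], [16, 19, 22],
    [23, 10, 9, 4], [11, 12, 23], [16, 18, 23], [23, 20, 19, 17], [4, 7, 8], [21, 22, 23]]

theorem wordF_eq (s : ℕ → ℕ) :
    run (wordF.map (List.map Fin.val)) s = run (wordF.reverse.map (List.map Fin.val)) s :=
  check_spec pat pat_good _
   [(1, 3, [14, 7, 0, 17, 3, 5, 11, 10, 18]), (2, 0, [18, 19, 21, 17, 16, 15, 22, 20, 23]),
    (3, 1, [11, 12, 23, 10, 9, 4, 22, 13, 21]), (2, 0, [5, 6, 21, 3, 2, 1, 22, 8, 23]),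
    (0, 0, [10, 14, 17, 1, 4, 19, 9, 20, 23]), (2, 2, [11, 12, 23, 20, 19, 17, 5, 7, 2]),
    (0, 0, [8, 13, 17, 0, 3, 19, 6, 20, 23]), (2, 0, [5, 9, 16, 4, 2, 0, 18, 10, 23]),
    (1, 3, [13, 7, 1, 17, 4, 5, 11, 8, 22]), (3, 1, [11, 12, 23, 8, 6, 3, 18, 14, 16]),
    (0, 5, [14, 7, 0, 20, 8, 2, 12, 4, 16]), (1, 3, [10, 7, 3, 15, 4, 6, 9, 8, 23]),
    (3, 1, [9, 12, 22, 8, 5, 1, 19, 14, 16]), (2, 0, [6, 11, 16, 4, 2, 0, 19, 13, 22]),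
    (0, 0, [8, 10, 15, 0, 1, 18, 5, 20, 22]), (2, 2, [9, 12, 22, 20, 18, 15, 6, 7, 2]),
    (0, 0, [13, 14, 15, 3, 4, 18, 11, 20, 22]), (1, 3, [14, 7, 0, 15, 1, 6, 9, 13, 19]),
    (0, 0, [13, 14, 15, 8, 10, 16, 12, 17, 21]), (2, 2, [9, 11, 21, 17, 16, 15, 6, 7, 5]),
    (0, 0, [3, 4, 15, 0, 1, 16, 2, 17, 21]), (2, 0, [6, 12, 18, 10, 5, 0, 19, 13, 21]),
    (3, 1, [9, 11, 21, 3, 2, 1, 19, 14, 18]), (1, 2, [13, 7, 1, 20, 10, 2, 12, 3, 21])]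
    _ (by decide +kernel) s

def actF : List (Fin 24) → (Fin 24 → ℕ) → Fin 24 → ℕ
  | [i, j, k] => app3 combR i j k
  | [i, j, k, l] => app4 combK i j k l
  | _ => id

def runF : List (List (Fin 24)) → (Fin 24 → ℕ) → Fin 24 → ℕ
  | [] => id
  | [o] => actF o
  | o :: w => actF o ∘ runF w

theorem runF_cons (o : List (Fin 24)) (w : List (List (Fin 24))) (v : Fin 24 → ℕ) :
    runF (o :: w) v = actF o (runF w v) := by
  cases w <;> rfl

theorem actF_spec (o : List (Fin 24)) (v : Fin 24 → ℕ) (s : ℕ → ℕ) (h : ∀ m, v m = s m.val)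
    (m : Fin 24) : actF o v m = act (o.map Fin.val) s m.val := by
  match o with
  | [] => exact h m
  | [_] => exact h m
  | [_, _] => exact h m
  | [i, j, k] => simp [actF, act, app3, h, Fin.ext_iff]
  | [i, j, k, l] => simp [actF, act, app4, h, Fin.ext_iff]
  | _ :: _ :: _ :: _ :: _ :: _ => exact h m

theorem runF_spec (w : List (List (Fin 24))) (v : Fin 24 → ℕ) (s : ℕ → ℕ)
    (h : ∀ m, v m = s m.val) (m : Fin 24) :
    runF w v m = run (w.map (List.map Fin.val)) s m.val := by
  induction w generalizing m with
  | nil => exact h m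
  | cons o w ih => rw [runF_cons]; exact actF_spec o _ _ ih m

theorem main : runF wordF = runF wordF.reverse := by
  funext v m
  obtain ⟨s, h⟩ : ∃ s : ℕ → ℕ, ∀ m : Fin 24, v m = s m.val :=
    ⟨fun n => if h : n < 24 then v ⟨n, h⟩ else 0, by intro m; simp⟩
  rw [runF_spec _ v _ h, runF_spec _ v _ h, wordF_eq]

end F4Tet

/-- The combinatorial maps solve the `F₄` analogue of the tetrahedron equation on ℕ²⁴:
with `S = R` the combinatorial R-map and `K` the combinatorial K-map, the 50-factor identity
of maps from ℕ²⁴ to ℕ²⁴ holds (positions written 1-based in the paper, 0-based here);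
the right-hand side is the product of the same 50 operators in the reverse order. -/
theorem combRK_F4_tetrahedron :
    (app3 combR 13 14 15 ∘
      app3 combR 8 10 15 ∘
      app4 combK 6 7 9 15 ∘
      app4 combK 16 14 12 8 ∘
      app3 combR 3 4 15 ∘
      app3 combR 6 11 16 ∘
      app3 combR 0 1 15 ∘
      app3 combR 5 9 16 ∘
      app3 combR 8 13 17 ∘
      app4 combK 16 4 2 0 ∘
      app3 combR 10 14 17 ∘
      app4 combK 5 7 11 17 ∘
      app3 combR 0 3 17 ∘
      app3 combR 0 7 14 ∘
      app3 combR 6 12 18 ∘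
      app4 combK 18 10 5 0 ∘
      app4 combK 18 14 11 3 ∘
      app3 combR 2 9 18 ∘
      app3 combR 3 7 10 ∘
      app4 combK 19 13 6 0 ∘
      app3 combR 1 4 17 ∘
      app3 combR 5 12 19 ∘
      app3 combR 2 11 19 ∘
      app3 combR 0 8 20 ∘
      app4 combK 19 14 9 1 ∘
      app3 combR 3 13 20 ∘
      app4 combK 2 7 12 20 ∘
      app3 combR 1 10 20 ∘
      app3 combR 1 7 13 ∘
      app3 combR 5 6 21 ∘
      app4 combK 21 3 2 1 ∘
      app3 combR 4 14 20 ∘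
      app4 combK 21 13 12 10 ∘
      app3 combR 9 11 21 ∘
      app4 combK 22 8 5 1 ∘
      app3 combR 2 6 22 ∘
      app3 combR 18 19 21 ∘
      app4 combK 21 17 16 15 ∘
      app3 combR 9 12 22 ∘
      app4 combK 22 13 11 4 ∘
      app3 combR 2 5 23 ∘
      app4 combK 22 20 18 15 ∘
      app4 combK 23 8 6 3 ∘
      app3 combR 16 19 22 ∘
      app4 combK 23 10 9 4 ∘
      app3 combR 11 12 23 ∘
      app3 combR 16 18 23 ∘
      app4 combK 23 20 19 17 ∘
      app3 combR 4 7 8 ∘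
      app3 combR 21 22 23 :
      (Fin 24 → ℕ) → Fin 24 → ℕ) =
    (app3 combR 21 22 23 ∘
      app3 combR 4 7 8 ∘
      app4 combK 23 20 19 17 ∘
      app3 combR 16 18 23 ∘
      app3 combR 11 12 23 ∘
      app4 combK 23 10 9 4 ∘
      app3 combR 16 19 22 ∘
      app4 combK 23 8 6 3 ∘
      app4 combK 22 20 18 15 ∘
      app3 combR 2 5 23 ∘
      app4 combK 22 13 11 4 ∘
      app3 combR 9 12 22 ∘
      app4 combK 21 17 16 15 ∘
      app3 combR 18 19 21 ∘
      app3 combR 2 6 22 ∘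
      app4 combK 22 8 5 1 ∘
      app3 combR 9 11 21 ∘
      app4 combK 21 13 12 10 ∘
      app3 combR 4 14 20 ∘
      app4 combK 21 3 2 1 ∘
      app3 combR 5 6 21 ∘
      app3 combR 1 7 13 ∘
      app3 combR 1 10 20 ∘
      app4 combK 2 7 12 20 ∘
      app3 combR 3 13 20 ∘
      app4 combK 19 14 9 1 ∘
      app3 combR 0 8 20 ∘
      app3 combR 2 11 19 ∘
      app3 combR 5 12 19 ∘
      app3 combR 1 4 17 ∘
      app4 combK 19 13 6 0 ∘
      app3 combR 3 7 10 ∘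
      app3 combR 2 9 18 ∘
      app4 combK 18 14 11 3 ∘
      app4 combK 18 10 5 0 ∘
      app3 combR 6 12 18 ∘
      app3 combR 0 7 14 ∘
      app3 combR 0 3 17 ∘
      app4 combK 5 7 11 17 ∘
      app3 combR 10 14 17 ∘
      app4 combK 16 4 2 0 ∘
      app3 combR 8 13 17 ∘
      app3 combR 5 9 16 ∘
      app3 combR 0 1 15 ∘
      app3 combR 6 11 16 ∘
      app3 combR 3 4 15 ∘
      app4 combK 16 14 12 8 ∘
      app4 combK 6 7 9 15 ∘
      app3 combR 8 10 15 ∘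
      app3 combR 13 14 15 :
      (Fin 24 → ℕ) → Fin 24 → ℕ) := by   exact F4Tet.main
end
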